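/- arXiv:2505.17523 — 4 statements merged into one kernel-verified Lean document; each statement's English description precedes it below -/
import Mathlib

section
/- Suppose T ⊆ 𝔹 satisfies T̃ = T. (Then for every β ∈ 𝔹 − T one has T_𝔭 ≠ 𝔹_𝔭 = T̃_𝔭 fails, i.e. T̃_𝔭 = T_𝔭 ≠ 𝔹_𝔭, so n_β is defined and σ^{n_β}β ∈ 𝔹 − T.) Then the minimal cone satisfies 𝒞^min_T = { Σ_{β ∈ 𝔹−T} ℓ_β e_β ∈ ℚ^{𝔹−T} : p^{n_β} ℓ_{σ^{n_β}β} ≥ ℓ_β for all β ∈ 𝔹 − T }. -/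
/- Setting: `B` is the finite nonempty set 𝔹 equipped with a permutation `σ` (Frobenius),
and `p` is a prime.  Weights live in `ℚ^𝔹 = (B → ℚ)`.  The orbits `𝔹_𝔭` of `σ` are the sets
`orbit σ β`, and for `T ⊆ 𝔹` we have `T_𝔭 = T ∩ orbit σ β`. -/

open scoped Classical

noncomputable section

namespace GO

variable {B : Type*} [Fintype B] [DecidableEq B]

/-- The standard basis vector `e_β` of `ℚ^𝔹`. -/
def e (β : B) : B → ℚ := fun τ => if τ = β then 1 else 0

/-- `β'` lies in the `σ`-orbit of `β`. -/
def sameOrbit (σ : Equiv.Perm B) (β β' : B) : Prop := ∃ n : ℕ, (σ ^ n) β = β'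

/-- The `σ`-orbit `𝔹_𝔭` of `β`. -/
def orbit (σ : Equiv.Perm B) (β : B) : Set B := {τ | sameOrbit σ β τ}

/-- `|𝔹_𝔭|`, the cardinality of the orbit of `β`. -/
def orbitCard (σ : Equiv.Perm B) (β : B) : ℕ := (orbit σ β).ncard

/-- For `β`, `β'` in the same orbit: the unique `n` with `0 < n ≤ |𝔹_𝔭|` and `σ^n β' = β`,
realized as the least positive `n` with `σ^n β' = β`. -/
def steps (σ : Equiv.Perm B) (β' β : B) : ℕ := sInf {n : ℕ | 0 < n ∧ (σ ^ n) β' = β}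

/-- For `β`, `β'` in the same orbit: the unique `n` with `0 ≤ n < |𝔹_𝔭|` and `σ^n β = β'`. -/
def steps0 (σ : Equiv.Perm B) (β β' : B) : ℕ := sInf {n : ℕ | (σ ^ n) β = β'}

/-- `h_β^{β'} = -e_β + p^n e_{β'}` where `β = σ^n β'` with `0 < n ≤ |𝔹_𝔭|`. -/
def hvec (σ : Equiv.Perm B) (p : ℕ) (β β' : B) : B → ℚ :=
  -(e β) + ((p : ℚ) ^ steps σ β' β) • e β'

/-- `b_β^{β'} = e_β + p^n e_{β'}` where `β = σ^n β'` with `0 < n ≤ |𝔹_𝔭|`. -/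
def bvec (σ : Equiv.Perm B) (p : ℕ) (β β' : B) : B → ℚ :=
  (e β) + ((p : ℚ) ^ steps σ β' β) • e β'

/-- `h_β = -e_β + p e_{σ⁻¹ β}`. -/
def hsimple (σ : Equiv.Perm B) (p : ℕ) (β : B) : B → ℚ := -(e β) + (p : ℚ) • e (σ⁻¹ β)

/-- `b_β = e_β + p e_{σ⁻¹ β}`. -/
def bsimple (σ : Equiv.Perm B) (p : ℕ) (β : B) : B → ℚ := (e β) + (p : ℚ) • e (σ⁻¹ β)

/-- The `ℚ^{≥0}`-cone generated by a set `S` of vectors: all finite nonnegative rational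
linear combinations of elements of `S`. -/
def cone {V : Type*} [AddCommMonoid V] [Module ℚ V] (S : Set V) : Set V :=
  {x | ∃ (n : ℕ) (c : Fin n → ℚ) (v : Fin n → V),
    (∀ i, 0 ≤ c i) ∧ (∀ i, v i ∈ S) ∧ x = ∑ i, c i • v i}

/-- A chain in `T` (automatically contained in a single orbit, so this is the notion of a
chain in `T_𝔭` for `T_𝔭 ⊊ 𝔹_𝔭`): `C = {σ^{-i}β : 0 ≤ i ≤ m} ⊆ T` with `σβ ∉ T` and
`σ^{-m-1}β ∉ T`. -/
def IsChainIn (σ : Equiv.Perm B) (T : Set B) (C : Set B) : Prop :=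
  ∃ (β : B) (m : ℕ), σ β ∉ T ∧ (σ⁻¹ ^ (m + 1)) β ∉ T ∧
    (∀ i ≤ m, (σ⁻¹ ^ i) β ∈ T) ∧ C = {τ | ∃ i ≤ m, τ = (σ⁻¹ ^ i) β}

/-- `C̃` for a chain `C`: equals `C` if `m` is odd (i.e. `|C| = m+1` is even), and
`C ∪ {σ^{-m-1}β} = C ∪ σ⁻¹(C)` if `m` is even (i.e. `|C|` odd). -/
def chainExt (σ : Equiv.Perm B) (C : Set B) : Set B :=
  if Odd C.ncard then C ∪ (⇑σ⁻¹ '' C) else C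

/-- `T̃ = ⋃_𝔭 T̃_𝔭`: the union of `T` with the extensions `C̃` of all chains `C` in `T`.
(For orbits with `T_𝔭 = 𝔹_𝔭` there are no chains and `T̃_𝔭 = 𝔹_𝔭 = T_𝔭`.) -/
def tilde (σ : Equiv.Perm B) (T : Set B) : Set B :=
  T ∪ ⋃ (C : Set B) (_ : IsChainIn σ T C), chainExt σ C

/-- `μ_β`: the least `i > 0` with `σ^i β ∉ T` if `T_𝔭 ≠ 𝔹_𝔭`, and `0` if `T_𝔭 = 𝔹_𝔭`. -/
def mu (σ : Equiv.Perm B) (T : Set B) (β : B) : ℕ :=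
  if orbit σ β ⊆ T then 0 else sInf {i : ℕ | 0 < i ∧ (σ ^ i) β ∉ T}

/-- `n_β`: the least `i > 0` with `σ^i β ∉ T̃` (meaningful when `T̃_𝔭 ≠ 𝔹_𝔭`). -/
def nn (σ : Equiv.Perm B) (T : Set B) (β : B) : ℕ :=
  sInf {i : ℕ | 0 < i ∧ (σ ^ i) β ∉ tilde σ T}

/-- `ν_β`: the least `i ≥ 0` with `σ^{-i} β ∉ T` (meaningful when `T_𝔭 ≠ 𝔹_𝔭`). -/
def nu (σ : Equiv.Perm B) (T : Set B) (β : B) : ℕ :=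
  sInf {i : ℕ | (σ⁻¹ ^ i) β ∉ T}

/-- `𝒯(T_𝔭) = (𝔹_𝔭 − T̃_𝔭) ∪ σ(T̃_𝔭 − T_𝔭)`, taken globally (union over all `𝔭`). -/
def Tscr (σ : Equiv.Perm B) (T : Set B) : Set B :=
  (tilde σ T)ᶜ ∪ (⇑σ '' (tilde σ T \ T))

/-- The generating set `⋃_𝔭 𝒢(T_𝔭)`:
`{h_β^{β'} : β ∈ ℋ(T_𝔭), β' ∈ 𝒯(T_𝔭)} ∪ {±b_β : β ∈ T_𝔭}` over all `𝔭`. -/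
def Dgen (σ : Equiv.Perm B) (p : ℕ) (T : Set B) : Set (B → ℚ) :=
  {v | ∃ β β', β ∉ T ∧ β' ∈ Tscr σ T ∧ sameOrbit σ β β' ∧ v = hvec σ p β β'}
  ∪ {v | ∃ β ∈ T, v = bsimple σ p β ∨ v = -(bsimple σ p β)}

/-- The cone `𝒟_T`. -/
def D (σ : Equiv.Perm B) (p : ℕ) (T : Set B) : Set (B → ℚ) := cone (Dgen σ p T)

/-- `h_{σ^{n_β}β}^{β} = -e_{σ^{n_β}β} + p^{n_β} e_β`. -/
def fH (σ : Equiv.Perm B) (p : ℕ) (T : Set B) (β : B) : B → ℚ :=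
  -(e ((σ ^ nn σ T β) β)) + ((p : ℚ) ^ nn σ T β) • e β

/-- `b_{σ^{n_β}β}^{β} = e_{σ^{n_β}β} + p^{n_β} e_β`. -/
def fB (σ : Equiv.Perm B) (p : ℕ) (T : Set B) (β : B) : B → ℚ :=
  (e ((σ ^ nn σ T β) β)) + ((p : ℚ) ^ nn σ T β) • e β

/-- The generating set `⋃_𝔭 𝒢′(T_𝔭)`:
if `𝔹_𝔭 − T̃_𝔭 ≠ ∅` it is `{h_{σ^{n_β}β}^β : β ∈ 𝔹_𝔭 − T̃_𝔭} ∪ {−b_{σ^{n_β}β}^β : β ∈ T̃_𝔭 − T_𝔭}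
∪ {±b_β : β ∈ T_𝔭}`, and if `𝔹_𝔭 = T̃_𝔭` it is `{−e_β : β ∈ 𝔹_𝔭 − T_𝔭} ∪ {±b_β : β ∈ T_𝔭}`. -/
def D'gen (σ : Equiv.Perm B) (p : ℕ) (T : Set B) : Set (B → ℚ) :=
  {v | ∃ β, β ∉ tilde σ T ∧ v = fH σ p T β}
  ∪ {v | ∃ β, β ∈ tilde σ T ∧ β ∉ T ∧ ¬ orbit σ β ⊆ tilde σ T ∧ v = -(fB σ p T β)}
  ∪ {v | ∃ β, β ∉ T ∧ orbit σ β ⊆ tilde σ T ∧ v = -(e β)}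
  ∪ {v | ∃ β ∈ T, v = bsimple σ p β ∨ v = -(bsimple σ p β)}

/-- The cone `𝒟′_T`. -/
def D' (σ : Equiv.Perm B) (p : ℕ) (T : Set B) : Set (B → ℚ) := cone (D'gen σ p T)

/-- `f_β(T)` for `β ∉ T`: `h_{σ^{n_β}β}^β` if `β ∈ 𝔹_𝔭 − T̃_𝔭`; `−b_{σ^{n_β}β}^β` if
`β ∈ T̃_𝔭 − T_𝔭` and `𝔹_𝔭 ≠ T̃_𝔭`; and `−(1+p^{|𝔹_𝔭|}) e_β` if `𝔹_𝔭 = T̃_𝔭`. -/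
def fvec (σ : Equiv.Perm B) (p : ℕ) (T : Set B) (β : B) : B → ℚ :=
  if orbit σ β ⊆ tilde σ T then -((1 + (p : ℚ) ^ orbitCard σ β) • e β)
  else if β ∈ tilde σ T then -(fB σ p T β) else fH σ p T β

/-- `𝔹(T) = ⋃_𝔭 𝔹_𝔭(T)`: `β ∈ 𝔹(T)` iff `β ∉ T`, the set `𝔹_𝔭 − T̃_𝔭` is nonempty, and
`𝔹_𝔭 − T̃_𝔭 ≠ {β}` (this encodes all three cases of the definition of `𝔹_𝔭(T)`). -/
def BT (σ : Equiv.Perm B) (T : Set B) : Set B :=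
  {β | β ∉ T ∧ (orbit σ β \ tilde σ T).Nonempty ∧ orbit σ β \ tilde σ T ≠ {β}}

/-- The sign function `ε_T : 𝔹 → {−1,0,1}`. -/
def epsT (σ : Equiv.Perm B) (T : Set B) (β : B) : ℚ :=
  if orbit σ β ⊆ T then 0
  else if β ∈ tilde σ T then (-1 : ℚ) ^ (mu σ T β - 1) else 1

/-- `L^ε[β, β'](κ) = Σ_{0 ≤ i ≤ n} ε(σ^iβ) p^i k_{σ^iβ}`, where `β' = σ^n β` with
`0 ≤ n < |𝔹_𝔭|`. -/
def Lfun (σ : Equiv.Perm B) (p : ℕ) (ε : B → ℚ) (β β' : B) (κ : B → ℚ) : ℚ :=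
  ∑ i ∈ Finset.range (steps0 σ β β' + 1), ε ((σ ^ i) β) * (p : ℚ) ^ i * κ ((σ ^ i) β)

/-- `L^ε[β] = L^ε[β, σ⁻¹β]`. -/
def Lfun1 (σ : Equiv.Perm B) (p : ℕ) (ε : B → ℚ) (β : B) (κ : B → ℚ) : ℚ :=
  Lfun σ p ε β (σ⁻¹ β) κ

/-- `L_{T,β}` for `β ∈ 𝔹 − T`: `L^{ε_T}[σ^{μ_β}β]` if `β ∈ 𝔹 − T̃`, and
`L^{ε_T}[β, σ^{μ_β−1}β]` if `β ∈ T̃ − T`. -/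
def LT (σ : Equiv.Perm B) (p : ℕ) (T : Set B) (β : B) (κ : B → ℚ) : ℚ :=
  if β ∈ tilde σ T then Lfun σ p (epsT σ T) β ((σ ^ (mu σ T β - 1)) β) κ
  else Lfun1 σ p (epsT σ T) ((σ ^ mu σ T β) β) κ

/-- `ε_{T,f_β}`: negates `ε_T` on `{β, σβ, …, σ^{μ_β−1}β}`. -/
def epsTf (σ : Equiv.Perm B) (T : Set B) (β τ : B) : ℚ :=
  if ∃ i < mu σ T β, τ = (σ ^ i) β then -(epsT σ T τ) else epsT σ T τ

/-- `L_{T,f_β,τ}` for `β ∈ 𝔹(T)` and `τ ∈ 𝔹 − (T ∪ {σ^{n_β}β})`, with `β′ = σ^{n_β}β` and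
`β̃ = σ^{μ_{β′}}β′`. -/
def LTf (σ : Equiv.Perm B) (p : ℕ) (T : Set B) (β τ : B) (κ : B → ℚ) : ℚ :=
  if τ = β then
    (if β ∈ tilde σ T then
      Lfun1 σ p (epsTf σ T β) ((σ ^ mu σ T ((σ ^ nn σ T β) β)) ((σ ^ nn σ T β) β)) κ
    else
      Lfun σ p (epsTf σ T β) β (σ⁻¹ ((σ ^ mu σ T ((σ ^ nn σ T β) β)) ((σ ^ nn σ T β) β))) κ)
  else
    (if τ ∈ tilde σ T then LT σ p T τ κ
     else Lfun1 σ p (epsTf σ T β) ((σ ^ mu σ T τ) τ) κ)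

/-- `𝒟_{T,f_β} = {κ : L_{T,f_β,τ}(κ) ≥ 0 for all τ ∈ 𝔹 − (T ∪ {σ^{n_β}β})}`. -/
def Df (σ : Equiv.Perm B) (p : ℕ) (T : Set B) (β : B) : Set (B → ℚ) :=
  {κ | ∀ τ, τ ∉ T → τ ≠ (σ ^ nn σ T β) β → 0 ≤ LTf σ p T β τ κ}

/-- `i_T : ℚ^𝔹 → ℚ^{𝔹−T}`, the linear map with `i_T(e_β) = 0` if `T_𝔭 = 𝔹_𝔭` and
`i_T(e_β) = (−p)^{ν_β} e_{σ^{−ν_β}β}` otherwise. -/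
def iT (σ : Equiv.Perm B) (p : ℕ) (T : Set B) (κ : B → ℚ) : {β : B // β ∉ T} → ℚ :=
  fun β₀ => ∑ β : B, κ β *
    (if orbit σ β ⊆ T then 0
     else if (σ⁻¹ ^ nu σ T β) β = β₀.1 then (-(p : ℚ)) ^ nu σ T β else 0)

/-- Restriction to `ℚ^{𝔹−T}` of a vector of `ℚ^𝔹` (used for vectors supported on `𝔹 − T`). -/
def res (T : Set B) (v : B → ℚ) : {β : B // β ∉ T} → ℚ := fun β => v β.1

/-- The generating set `𝒢^{T-red}(T) = ⋃_𝔭 𝒢_𝔭^{T-red}(T)` of the reduced cone. -/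
def Gred (σ : Equiv.Perm B) (p : ℕ) (T : Set B) : Set ({β : B // β ∉ T} → ℚ) :=
  {v | ∃ β, β ∉ tilde σ T ∧ v = res T (fH σ p T β)}
  ∪ {v | ∃ β, β ∈ tilde σ T ∧ β ∉ T ∧ ¬ orbit σ β ⊆ tilde σ T ∧ v = res T (-(fB σ p T β))}
  ∪ {v | ∃ β, β ∉ T ∧ orbit σ β ⊆ tilde σ T ∧ v = res T (-(e β))}

/-- The minimal cone `𝒞^min_T = i_T(𝒟_T ∩ ⋂_{β ∈ 𝔹(T)} 𝒟_{T,f_β}) ⊆ ℚ^{𝔹−T}`. -/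
def Cmin (σ : Equiv.Perm B) (p : ℕ) (T : Set B) : Set ({β : B // β ∉ T} → ℚ) :=
  iT σ p T '' (D σ p T ∩ {κ | ∀ β ∈ BT σ T, κ ∈ Df σ p T β})

/-- `g_β`: `b_β` if `β ∈ T_𝔭`; `−e_β` if `β ∈ T̃_𝔭 − T_𝔭` and `𝔹_𝔭 = T̃_𝔭`;
`−b_{σ^{n_β}β}^β` if `β ∈ T̃_𝔭 − T_𝔭` and `𝔹_𝔭 ≠ T̃_𝔭`; `h_{σ^{n_β}β}^β` if `β ∈ 𝔹_𝔭 − T̃_𝔭`. -/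
def gvec (σ : Equiv.Perm B) (p : ℕ) (T : Set B) (β : B) : B → ℚ :=
  if β ∈ T then bsimple σ p β
  else if orbit σ β ⊆ tilde σ T then -(e β)
  else if β ∈ tilde σ T then -(fB σ p T β)
  else fH σ p T β

/-- The map `σ̄ : β ↦ σ^{n_β} β`. -/
def sigbar (σ : Equiv.Perm B) (T : Set B) (β : B) : B := (σ ^ nn σ T β) β

/-- `h_β = -e_β + p e_{σ⁻¹β}` as an element of `ℤ^𝔹`. -/
def hZ (σ : Equiv.Perm B) (p : ℕ) (β : B) : B → ℤ :=
  fun τ => (if τ = β then -1 else 0) + (if τ = σ⁻¹ β then (p : ℤ) else 0)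

end GO

end

namespace GO

section aux
variable {B : Type*} [Fintype B] [DecidableEq B]

lemma invpow (σ : Equiv.Perm B) (s : B) {k i : ℕ} (h : k ≤ i) :
    (σ⁻¹ ^ k) ((σ ^ i) s) = (σ ^ (i - k)) s := by
  obtain ⟨j, rfl⟩ := Nat.exists_eq_add_of_le h
  rw [pow_add, Equiv.Perm.mul_apply, inv_pow]
  simp

lemma powpow (σ : Equiv.Perm B) (s : B) (k i : ℕ) :
    (σ ^ k) ((σ ^ i) s) = (σ ^ (k + i)) s := by
  rw [pow_add, Equiv.Perm.mul_apply]

lemma exists_ret (σ : Equiv.Perm B) : ∃ k : ℕ, 0 < k ∧ σ ^ k = 1 :=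
  ⟨orderOf σ, orderOf_pos σ, pow_orderOf_eq_one σ⟩

lemma back (σ : Equiv.Perm B) (s : B) (i : ℕ) : ∃ k : ℕ, (σ ^ k) ((σ ^ i) s) = s := by
  obtain ⟨k, hk, h1⟩ := exists_ret σ
  refine ⟨k * i - i, ?_⟩
  rw [powpow, Nat.sub_add_cancel (Nat.le_mul_of_pos_left i hk), pow_mul, h1]
  simp

variable {σ : Equiv.Perm B} {T : Set B}

lemma nn_spec (hT : tilde σ T = T) {s : B} (hs : s ∉ T) :
    0 < nn σ T s ∧ (σ ^ nn σ T s) s ∉ T ∧ ∀ i, 0 < i → i < nn σ T s → (σ ^ i) s ∈ T := by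
  have hne : {i : ℕ | 0 < i ∧ (σ ^ i) s ∉ tilde σ T}.Nonempty := by
    obtain ⟨k, hk, h1⟩ := exists_ret σ
    exact ⟨k, hk, by rw [h1, hT]; exact hs⟩
  have h := Nat.sInf_mem hne
  refine ⟨h.1, by
    have h' : (σ ^ nn σ T s) s ∉ tilde σ T := h.2
    rwa [hT] at h', fun i hi hlt => ?_⟩
  by_contra hc
  have := Nat.sInf_le (s := {i : ℕ | 0 < i ∧ (σ ^ i) s ∉ tilde σ T}) (m := i)
    ⟨hi, by rwa [hT]⟩
  unfold nn at hlt
  omega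

lemma not_orbit {s : B} (hs : s ∉ T) (i : ℕ) : ¬ orbit σ ((σ ^ i) s) ⊆ T := by
  intro h
  exact hs (h (back σ s i))

lemma mu_pow (hT : tilde σ T = T) {s : B} (hs : s ∉ T) {i : ℕ} (hi : i < nn σ T s) :
    mu σ T ((σ ^ i) s) = nn σ T s - i := by
  obtain ⟨h0, h1, h2⟩ := nn_spec hT hs
  unfold mu
  rw [if_neg (not_orbit hs i)]
  apply le_antisymm
  · apply Nat.sInf_le
    refine ⟨by omega, ?_⟩
    rw [powpow, Nat.sub_add_cancel hi.le]
    exact h1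
  · apply le_csInf
    · refine ⟨nn σ T s - i, by omega, ?_⟩
      rw [powpow, Nat.sub_add_cancel hi.le]
      exact h1
    · rintro b ⟨hb, hb'⟩
      by_contra hlt
      rw [powpow] at hb'
      exact hb' (h2 _ (by omega) (by omega))

lemma mu_eq (hT : tilde σ T = T) {s : B} (hs : s ∉ T) : mu σ T s = nn σ T s := by
  have := mu_pow hT hs (i := 0) (nn_spec hT hs).1
  simpa using this

lemma nu_pow (hT : tilde σ T = T) {s : B} (hs : s ∉ T) {i : ℕ} (hi : i < nn σ T s) :
    nu σ T ((σ ^ i) s) = i := by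
  obtain ⟨h0, h1, h2⟩ := nn_spec hT hs
  have hm : (σ⁻¹ ^ i) ((σ ^ i) s) ∉ T := by rw [invpow σ s le_rfl]; simpa using hs
  unfold nu
  apply le_antisymm
  · exact Nat.sInf_le hm
  · apply le_csInf ⟨i, hm⟩
    intro b hb
    by_contra hlt
    have hb' : (σ⁻¹ ^ b) ((σ ^ i) s) ∉ T := hb
    rw [invpow σ s (by omega)] at hb'
    exact hb' (h2 _ (by omega) (by omega))

lemma nn_odd (hT : tilde σ T = T) {s : B} (hs : s ∉ T) : Odd (nn σ T s) := by
  obtain ⟨h0, h1, h2⟩ := nn_spec hT hs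
  by_contra hodd
  rw [Nat.not_odd_iff_even] at hodd
  obtain ⟨r, hr⟩ := hodd
  set n := nn σ T s with hn
  apply hs
  rw [← hT]
  right
  set C : Set B := (fun i => (σ ^ i) s) '' (Finset.Icc 1 (n - 1) : Set ℕ) with hC
  have hchain : IsChainIn σ T C := by
    refine ⟨(σ ^ (n - 1)) s, n - 2, ?_, ?_, ?_, ?_⟩
    · have : σ ((σ ^ (n - 1)) s) = (σ ^ n) s := by
        have := powpow σ s 1 (n - 1)
        rw [pow_one] at this
        rw [this]; congr 2; omega
      rw [this]; exact h1
    · rw [invpow σ s (by omega)]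
      have : n - 1 - (n - 2 + 1) = 0 := by omega
      rw [this]; simpa using hs
    · intro i hi
      rw [invpow σ s (by omega)]
      exact h2 _ (by omega) (by omega)
    · ext τ
      constructor
      · rintro ⟨i, hi, rfl⟩
        have hi' : 1 ≤ i ∧ i ≤ n - 1 := by simpa using hi
        refine ⟨n - 1 - i, by omega, ?_⟩
        rw [invpow σ s (by omega)]
        have : n - 1 - (n - 1 - i) = i := by omega
        rw [this]
      · rintro ⟨i, hi, rfl⟩
        refine ⟨n - 1 - i, ?_, ?_⟩
        · simp; omega
        · rw [invpow σ s (by omega)]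
  have hcard : C.ncard = n - 1 := by
    rw [hC, Set.InjOn.ncard_image, Set.ncard_coe_finset]
    · simp
    · intro i hi j hj hij
      have hi' : 1 ≤ i ∧ i ≤ n - 1 := by simpa using hi
      have hj' : 1 ≤ j ∧ j ≤ n - 1 := by simpa using hj
      have a := nu_pow hT hs (i := i) (by omega)
      have b := nu_pow hT hs (i := j) (by omega)
      have hij' : (σ ^ i) s = (σ ^ j) s := hij
      rw [hij'] at a
      omega
  refine Set.mem_iUnion.2 ⟨C, Set.mem_iUnion.2 ⟨hchain, ?_⟩⟩
  unfold chainExt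
  rw [if_pos (by rw [hcard]; exact ⟨r - 1, by omega⟩)]
  right
  refine ⟨σ s, ⟨1, ?_, by simp⟩, by simp⟩
  simp; omega

lemma eps_pow (hT : tilde σ T = T) {s : B} (hs : s ∉ T) {i : ℕ} (hi : i < nn σ T s) :
    epsT σ T ((σ ^ i) s) = (-1 : ℚ) ^ i := by
  obtain ⟨h0, h1, h2⟩ := nn_spec hT hs
  unfold epsT
  rw [if_neg (not_orbit hs i), hT]
  rcases Nat.eq_zero_or_pos i with rfl | hpos
  · simp [hs]
  · rw [if_pos (h2 i hpos hi), mu_pow hT hs hi]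
    obtain ⟨r, hr⟩ := nn_odd hT hs
    have : (nn σ T s - i - 1) + i = 2 * r := by omega
    have h3 : (-1 : ℚ) ^ (nn σ T s - i - 1) * (-1) ^ i = 1 := by
      rw [← pow_add, this, pow_mul]; simp
    rcases neg_one_pow_eq_or ℚ i with h | h <;> rw [h] at h3 ⊢ <;> linarith

lemma eps_notMem (hT : tilde σ T = T) {s : B} (hs : s ∉ T) : epsT σ T s = 1 := by
  have := eps_pow hT hs (nn_spec hT hs).1
  simpa using this

lemma iT_eq (hT : tilde σ T = T) (p : ℕ) (κ : B → ℚ) (s : {β : B // β ∉ T}) :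
    iT σ p T κ s = ∑ i ∈ Finset.range (nn σ T s.1), (-1) ^ i * (p : ℚ) ^ i * κ ((σ ^ i) s.1) := by
  obtain ⟨s, hs⟩ := s
  obtain ⟨h0, h1, h2⟩ := nn_spec hT hs
  unfold iT
  symm
  have hinj : Set.InjOn (fun i => (σ ^ i) s) (Finset.range (nn σ T s) : Set ℕ) := by
    intro i hi j hj hij
    have a := nu_pow hT hs (i := i) (by simpa using hi)
    have b := nu_pow hT hs (i := j) (by simpa using hj)
    have hij' : (σ ^ i) s = (σ ^ j) s := hij
    rw [hij'] at a
    omega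
  rw [← Finset.sum_subset (Finset.subset_univ ((Finset.range (nn σ T s)).image (fun i => (σ ^ i) s))),
    Finset.sum_image hinj]
  · apply Finset.sum_congr rfl
    intro i hi
    have hi' : i < nn σ T s := by simpa using hi
    rw [if_neg (not_orbit hs i), nu_pow hT hs hi', invpow σ s le_rfl]
    rw [if_pos (by simp), neg_pow]
    ring
  · intro x _ hx
    split_ifs with ho hxs
    · simp
    · exfalso
      apply hx
      have hxs' : (σ⁻¹ ^ nu σ T x) x = s := hxs
      have hxe : x = (σ ^ nu σ T x) s := by
        conv_rhs => rw [← hxs', inv_pow]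
        exact (Equiv.apply_symm_apply (σ ^ nu σ T x) x).symm
      rw [Finset.mem_image]
      refine ⟨nu σ T x, ?_, hxe.symm⟩
      rw [Finset.mem_range]
      by_contra hlt
      apply h1
      by_contra hc
      have hle : nu σ T x ≤ nu σ T x - nn σ T s := by
        apply Nat.sInf_le
        show (σ⁻¹ ^ (nu σ T x - nn σ T s)) x ∉ T
        have : (σ⁻¹ ^ (nu σ T x - nn σ T s)) x = (σ ^ nn σ T s) s := by
          conv_lhs => rw [hxe, ← hxe]
          generalize nu σ T x = a at hxe hlt
          rw [hxe, invpow σ s (by omega)]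
          congr 2; omega
        rw [this]; exact hc
      omega
    · simp

/-- If σ^n s = s then s is the only element outside `T` in its orbit. -/
lemma uniq (hT : tilde σ T = T) {s t : B} (hs : s ∉ T) (ht : t ∉ T) (hst : sameOrbit σ s t)
    (h : (σ ^ nn σ T s) s = s) : t = s := by
  obtain ⟨h0, h1, h2⟩ := nn_spec hT hs
  obtain ⟨k, rfl⟩ := hst
  have hk : (σ ^ k) s = (σ ^ (k % nn σ T s)) s := by
    have hq : ∀ q : ℕ, (σ ^ (nn σ T s * q)) s = s := by
      intro q
      induction q with
      | zero => simp
      | succ q ih => rw [Nat.mul_succ, pow_add, Equiv.Perm.mul_apply, h, ih]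
    conv_lhs => rw [← Nat.mod_add_div k (nn σ T s), pow_add, Equiv.Perm.mul_apply, hq]
  rw [hk] at ht ⊢
  rcases Nat.eq_zero_or_pos (k % nn σ T s) with h3 | h3
  · rw [h3]; simp
  · exact absurd (h2 _ h3 (Nat.mod_lt _ h0)) ht

lemma BT_iff (hT : tilde σ T = T) {s : B} (hs : s ∉ T) :
    s ∈ BT σ T ↔ (σ ^ nn σ T s) s ≠ s := by
  obtain ⟨h0, h1, h2⟩ := nn_spec hT hs
  have hself : s ∈ orbit σ s := ⟨0, by simp⟩
  unfold BT
  rw [hT]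
  constructor
  · rintro ⟨_, _, h⟩ hc
    apply h
    ext t
    constructor
    · rintro ⟨ho, ht⟩
      exact uniq hT hs ht ho hc
    · rintro rfl
      exact ⟨hself, hs⟩
  · intro h
    refine ⟨hs, ⟨s, hself, hs⟩, fun hc => h ?_⟩
    have : (σ ^ nn σ T s) s ∈ orbit σ s \ T := ⟨⟨_, rfl⟩, h1⟩
    rw [hc] at this
    exact this

lemma steps0_inv (σ : Equiv.Perm B) (s : B) :
    (σ ^ (steps0 σ s (σ⁻¹ s) + 1)) s = s ∧
      ∀ j, 0 < j → j < steps0 σ s (σ⁻¹ s) + 1 → (σ ^ j) s ≠ s := by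
  have hne : {n : ℕ | (σ ^ n) s = σ⁻¹ s}.Nonempty := by
    obtain ⟨k, hk, h1⟩ := exists_ret σ
    refine ⟨k - 1, ?_⟩
    show (σ ^ (k - 1)) s = σ⁻¹ s
    rw [Equiv.Perm.eq_inv_iff_eq]
    have := powpow σ s 1 (k - 1)
    rw [pow_one] at this
    rw [this, show 1 + (k - 1) = k by omega, h1]; rfl
  have hm : (σ ^ (steps0 σ s (σ⁻¹ s))) s = σ⁻¹ s := Nat.sInf_mem hne
  constructor
  · rw [pow_succ', Equiv.Perm.mul_apply, hm]; simp
  · intro j hj hlt hc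
    have : steps0 σ s (σ⁻¹ s) ≤ j - 1 := by
      apply Nat.sInf_le
      show (σ ^ (j - 1)) s = σ⁻¹ s
      rw [Equiv.Perm.eq_inv_iff_eq]
      have := powpow σ s 1 (j - 1)
      rw [pow_one] at this
      rw [this, show 1 + (j - 1) = j by omega, hc]
    omega

lemma LTf_self (hT : tilde σ T = T) (p : ℕ) (κ : B → ℚ) {s : B} (hs : s ∉ T)
    (hne : (σ ^ nn σ T s) s ≠ s) :
    LTf σ p T s s κ = - iT σ p T κ ⟨s, hs⟩ +
      (p : ℚ) ^ nn σ T s * iT σ p T κ ⟨(σ ^ nn σ T s) s, (nn_spec hT hs).2.1⟩ := by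
  obtain ⟨h0, h1, h2⟩ := nn_spec hT hs
  rw [iT_eq hT, iT_eq hT]
  unfold LTf
  rw [if_pos rfl, hT, if_neg hs, mu_eq hT h1]
  dsimp only
  generalize hn : nn σ T s = n at *
  generalize ht : (σ ^ n) s = t at *
  obtain ⟨g0, g1, g2⟩ := nn_spec hT h1
  generalize hm : nn σ T t = m at *
  have hk : ∀ j, (σ ^ j) t = (σ ^ (n + j)) s := by
    intro j; rw [← ht, powpow, add_comm]
  have hst : steps0 σ s (σ⁻¹ ((σ ^ m) t)) = n + m - 1 := by
    have hmem : (σ ^ (n + m - 1)) s = σ⁻¹ ((σ ^ m) t) := by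
      rw [Equiv.Perm.eq_inv_iff_eq, hk]
      have := powpow σ s 1 (n + m - 1)
      rw [pow_one] at this
      rw [this]; congr 2; omega
    unfold steps0
    apply le_antisymm
    · exact Nat.sInf_le hmem
    · apply le_csInf (s := {k : ℕ | (σ ^ k) s = σ⁻¹ ((σ ^ m) t)}) ⟨_, hmem⟩
      intro b hb
      have hb' : (σ ^ b) s = σ⁻¹ ((σ ^ m) t) := hb
      rw [Equiv.Perm.eq_inv_iff_eq] at hb'
      have := powpow σ s 1 b
      rw [pow_one] at this
      rw [this] at hb'
      by_contra hlt
      rcases lt_trichotomy (1 + b) n with h | h | h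
      · exact g1 (hb' ▸ h2 _ (by omega) h)
      · rw [h, ht] at hb'
        have hst : sameOrbit σ t s := by rw [← ht]; exact back σ s n
        exact hne (uniq hT h1 hs hst (by rw [hm]; exact hb'.symm)).symm
      · have := g2 (1 + b - n) (by omega) (by omega)
        rw [hk, show n + (1 + b - n) = 1 + b by omega, hb'] at this
        exact g1 this
  unfold Lfun
  rw [hst, show n + m - 1 + 1 = n + m by omega, Finset.sum_range_add, Finset.mul_sum,
    ← Finset.sum_neg_distrib]
  congr 1
  · apply Finset.sum_congr rfl
    intro i hi
    have hi' : i < n := by simpa using hi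
    unfold epsTf
    rw [if_pos ⟨i, by rw [mu_eq hT hs]; omega, rfl⟩, eps_pow hT hs (by omega)]
    ring
  · apply Finset.sum_congr rfl
    intro j hj
    have hj' : j < m := by simpa using hj
    rw [← hk]
    unfold epsTf
    rw [if_neg, eps_pow hT h1 (by omega), pow_add]
    · ring
    · rintro ⟨k, hkl, hke⟩
      rw [mu_eq hT hs] at hkl
      have a := nu_pow hT h1 (i := j) (by omega)
      have b := nu_pow hT hs hkl
      rw [hke] at a
      have : j = k := by omega
      subst this
      exact hne ((σ ^ j).injective hke)

lemma mul_p_le {p : ℕ} (hp : p.Prime) {n : ℕ} (hn : 0 < n) : (1 : ℚ) < (p : ℚ) ^ n := by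
  apply one_lt_pow₀ _ (by omega)
  exact_mod_cast hp.one_lt

/-- Nonnegativity of the other functionals for vectors supported off `T`. -/
lemma LTf_other (hT : tilde σ T = T) {p : ℕ} (κ : B → ℚ)
    (hκT : ∀ s ∈ T, κ s = 0) (hκ0 : ∀ s, 0 ≤ κ s)
    (hκ : ∀ s, s ∉ T → κ s ≤ (p : ℚ) ^ nn σ T s * κ ((σ ^ nn σ T s) s))
    {β τ : B} (hβ : β ∉ T) (hτ : τ ∉ T) (hne : τ ≠ β) : 0 ≤ LTf σ p T β τ κ := by
  obtain ⟨h0, h1, h2⟩ := nn_spec hT hτ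
  obtain ⟨b0, b1, b2⟩ := nn_spec hT hβ
  unfold LTf
  rw [if_neg hne, hT, if_neg hτ, mu_eq hT hτ]
  unfold Lfun1 Lfun
  generalize hs : (σ ^ nn σ T τ) τ = s at *
  obtain ⟨f1, f2⟩ := steps0_inv σ s
  generalize steps0 σ s (σ⁻¹ s) + 1 = f at *
  have pp : (0 : ℚ) ≤ p := by positivity
  have key : ∀ x, x ≠ β → 0 ≤ epsTf σ T β x * κ x := by
    intro x hx
    by_cases hxT : x ∈ T
    · rw [hκT x hxT]; simp
    · unfold epsTf
      rw [if_neg, eps_notMem hT hxT, one_mul]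
      · exact hκ0 x
      · rintro ⟨i, hi, rfl⟩
        rw [mu_eq hT hβ] at hi
        rcases Nat.eq_zero_or_pos i with rfl | hpos
        · simp at hx
        · exact hxT (b2 i hpos hi)
  have key' : ∀ i, (σ ^ i) s ≠ β → 0 ≤ epsTf σ T β ((σ ^ i) s) * (p : ℚ) ^ i * κ ((σ ^ i) s) := by
    intro i hi
    have := mul_nonneg (key _ hi) (pow_nonneg pp i)
    linarith
  by_cases hex : ∃ i < f, (σ ^ i) s = β
  · obtain ⟨i, hi, hiβ⟩ := hex
    have hβe : epsTf σ T β β = -1 := by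
      unfold epsTf
      rw [if_pos ⟨0, by rw [mu_eq hT hβ]; exact b0, by simp⟩, eps_notMem hT hβ]
    -- position of τ
    have hnf : nn σ T τ ≤ f := by
      by_contra hlt
      have hf : 0 < f := by omega
      have : (σ ^ (nn σ T τ - f)) τ = s := by
        apply (σ ^ f).injective
        rw [f1, powpow, show f + (nn σ T τ - f) = nn σ T τ by omega, hs]
      exact h1 (this ▸ h2 _ (by omega) (by omega))
    have hpos : (σ ^ (f - nn σ T τ)) s = τ := by
      rw [← hs, powpow, Nat.sub_add_cancel hnf]
      apply (σ ^ nn σ T τ).injective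
      rw [powpow, add_comm, ← powpow, hs, f1]
    have hlt : i + nn σ T β < f := by
      have hi1 : i ≤ f - nn σ T τ := by
        by_contra hc
        have := h2 (i - (f - nn σ T τ)) (by omega) (by omega)
        generalize nn σ T τ = m at *
        rw [← hpos, powpow, Nat.sub_add_cancel (by omega), hiβ] at this
        exact hβ this
      have hi2 : i ≠ f - nn σ T τ := by
        intro hc
        rw [hc, hpos] at hiβ
        exact hne hiβ
      by_contra hc
      have := b2 (f - nn σ T τ - i) (by omega) (by omega)
      rw [← hiβ, powpow, Nat.sub_add_cancel (by omega), hpos] at this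
      exact hτ this
    have hother : ∀ j < f, j ≠ i → (σ ^ j) s ≠ β := by
      intro j hj hji hc
      rw [← hiβ] at hc
      rcases lt_or_gt_of_ne hji with h | h
      · refine f2 (i - j) (by omega) (by omega) ?_
        apply (σ ^ j).injective
        rw [powpow, show j + (i - j) = i by omega, hc]
      · refine f2 (j - i) (by omega) (by omega) ?_
        apply (σ ^ i).injective
        rw [powpow, show i + (j - i) = j by omega, hc]
    have hmem : i ∈ Finset.range f := by simpa using hi
    rw [← Finset.add_sum_erase _ _ hmem]
    have hmem2 : i + nn σ T β ∈ (Finset.range f).erase i := by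
      simp; omega
    have hge := Finset.single_le_sum
      (f := fun j => epsTf σ T β ((σ ^ j) s) * (p : ℚ) ^ j * κ ((σ ^ j) s))
      (s := (Finset.range f).erase i) (fun j hj => by
        rw [Finset.mem_erase, Finset.mem_range] at hj
        exact key' j (hother j hj.2 hj.1)) hmem2
    have hβ' : (σ ^ (i + nn σ T β)) s = (σ ^ nn σ T β) β := by
      rw [← hiβ, powpow, add_comm]
    have hne' := hother (i + nn σ T β) hlt (by omega)
    have he1 : epsTf σ T β ((σ ^ nn σ T β) β) = 1 := by
      unfold epsTf
      rw [if_neg, eps_notMem hT b1]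
      rintro ⟨k, hk, hke⟩
      rw [mu_eq hT hβ] at hk
      rcases Nat.eq_zero_or_pos k with rfl | hpos
      · rw [hβ'] at hne'
        simp only [pow_zero] at hke
        exact hne' hke
      · exact b1 (hke ▸ b2 k hpos hk)
    rw [hβ', he1] at hge
    rw [hiβ, hβe]
    have h3 := mul_le_mul_of_nonneg_left (hκ β hβ) (pow_nonneg pp i)
    rw [pow_add] at hge
    linarith
  · push Not at hex
    exact Finset.sum_nonneg fun i hi => key' i (hex i (by simpa using hi))

/-- `κ ↦ i_T(κ)_s` is nonnegative on `D` when `s` is alone in its orbit. -/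
lemma D_nonneg (hT : tilde σ T = T) {p : ℕ} (hp : p.Prime) {κ : B → ℚ} (hκ : κ ∈ D σ p T)
    {s : B} (hs : s ∉ T) (h : (σ ^ nn σ T s) s = s) : 0 ≤ iT σ p T κ ⟨s, hs⟩ := by
  obtain ⟨N, c, v, hc, hv, rfl⟩ := hκ
  let w : B → ℚ := fun β => (if orbit σ β ⊆ T then 0
     else if (σ⁻¹ ^ nu σ T β) β = s then (-(p : ℚ)) ^ nu σ T β else 0)
  have hiT : ∀ κ, iT σ p T κ ⟨s, hs⟩ = ∑ β, κ β * w β := fun κ => rfl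
  have he : ∀ β : B, ∑ x, e β x * w x = w β := by
    intro β; simp [e]
  have hlin : ∀ (a : ℚ) (β γ : B), ∑ x, (e β + a • e γ) x * w x = w β + a * w γ := by
    intro a β γ
    rw [← he β, ← he γ, Finset.mul_sum, ← Finset.sum_add_distrib]
    apply Finset.sum_congr rfl
    intro x _
    simp; ring
  have hlin' : ∀ (a : ℚ) (β γ : B), ∑ x, (-e β + a • e γ) x * w x = - w β + a * w γ := by
    intro a β γ
    rw [← he β, ← he γ, Finset.mul_sum, ← Finset.sum_neg_distrib, ← Finset.sum_add_distrib]
    apply Finset.sum_congr rfl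
    intro x _
    simp; ring
  have hws : w s = 1 := by
    have h1 := nu_pow hT hs (nn_spec hT hs).1
    have h2 : ¬ orbit σ s ⊆ T := by simpa using not_orbit (σ := σ) hs 0
    simp only [pow_zero, Equiv.Perm.coe_one, id] at h1
    show (if orbit σ s ⊆ T then (0 : ℚ) else _) = 1
    rw [if_neg h2, h1]
    simp
  have hwo : ∀ t, t ∉ T → t ≠ s → w t = 0 := by
    intro t ht hts
    have h1 := nu_pow hT ht (nn_spec hT ht).1
    simp only [pow_zero, Equiv.Perm.coe_one, id] at h1
    show (if orbit σ t ⊆ T then (0 : ℚ) else _) = 0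
    rw [h1]
    simp [hts]
  have hwb : ∀ β ∈ T, w β + p * w (σ⁻¹ β) = 0 := by
    intro β hβ
    have ho : orbit σ (σ⁻¹ β) ⊆ T ↔ orbit σ β ⊆ T := by
      have hsub1 : orbit σ β ⊆ orbit σ (σ⁻¹ β) := by
        rintro x ⟨n, rfl⟩
        exact ⟨n + 1, by rw [pow_succ, Equiv.Perm.mul_apply]; simp⟩
      have hsub2 : orbit σ (σ⁻¹ β) ⊆ orbit σ β := by
        rintro x ⟨n, rfl⟩
        obtain ⟨k, hk⟩ := back σ (σ⁻¹ β) 1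
        refine ⟨n + k, ?_⟩
        rw [← powpow]
        have hσ : σ (σ⁻¹ β) = β := Equiv.apply_symm_apply σ β
        rw [pow_one, hσ] at hk
        rw [hk]
      exact ⟨fun h => hsub1.trans h, fun h => hsub2.trans h⟩
    show (if orbit σ β ⊆ T then (0 : ℚ) else _) + p * (if orbit σ (σ⁻¹ β) ⊆ T then (0 : ℚ) else _) = 0
    by_cases hoT : orbit σ β ⊆ T
    · rw [if_pos hoT, if_pos (ho.2 hoT)]; simp
    · rw [if_neg hoT, if_neg (fun h => hoT (ho.1 h))]
      have hne : {i : ℕ | (σ⁻¹ ^ i) β ∉ T}.Nonempty := by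
        by_contra hc
        rw [Set.not_nonempty_iff_eq_empty] at hc
        apply hoT
        rintro x ⟨n, rfl⟩
        by_contra hx
        obtain ⟨k, hk, h1⟩ := exists_ret σ
        have : (k * n - n) ∈ {i : ℕ | (σ⁻¹ ^ i) β ∉ T} := by
          show (σ⁻¹ ^ (k * n - n)) β ∉ T
          have : (σ ^ (k * n)) β = β := by rw [pow_mul, h1]; simp
          conv => rw [← this]
          rw [invpow σ β (Nat.sub_le _ _), Nat.sub_sub_self (Nat.le_mul_of_pos_left n hk)]
          exact hx
        rw [hc] at this
        exact this
      have hs' : ∀ i, (σ⁻¹ ^ i) (σ⁻¹ β) = (σ⁻¹ ^ (i + 1)) β := by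
        intro i; rw [pow_succ, Equiv.Perm.mul_apply]
      have hnu : nu σ T β = nu σ T (σ⁻¹ β) + 1 := by
        have hm : (σ⁻¹ ^ nu σ T β) β ∉ T := Nat.sInf_mem hne
        have hpos : nu σ T β ≠ 0 := by
          intro h0; rw [h0] at hm; exact hm hβ
        have hm1 : (σ⁻¹ ^ (nu σ T β - 1)) (σ⁻¹ β) ∉ T := by
          rw [hs', Nat.sub_add_cancel (by omega)]; exact hm
        have hle : nu σ T (σ⁻¹ β) ≤ nu σ T β - 1 := Nat.sInf_le hm1
        have hm2 : (σ⁻¹ ^ nu σ T (σ⁻¹ β)) (σ⁻¹ β) ∉ T :=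
          Nat.sInf_mem (s := {i : ℕ | (σ⁻¹ ^ i) (σ⁻¹ β) ∉ T}) ⟨_, hm1⟩
        rw [hs'] at hm2
        have hle2 : nu σ T β ≤ nu σ T (σ⁻¹ β) + 1 := Nat.sInf_le hm2
        omega
      rw [hs', hnu]
      split_ifs
      · rw [pow_succ]; ring
      · simp
  have hgen : ∀ u ∈ Dgen σ p T, 0 ≤ ∑ x, u x * w x := by
    rintro u (⟨β, β', hβ, hβ', ho, rfl⟩ | ⟨β, hβ, rfl | rfl⟩)
    · have hβ'' : β' ∉ T := by
        simpa [Tscr, hT] using hβ'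
      unfold hvec
      rw [hlin']
      by_cases h1 : β = s
      · subst h1
        have := uniq hT hβ hβ'' ho h
        subst this
        rw [hws]
        have : (1 : ℚ) ≤ (p : ℚ) ^ steps σ β' β' :=
          one_le_pow₀ (by exact_mod_cast hp.one_lt.le)
        linarith
      · rw [hwo β hβ h1]
        by_cases h2 : β' = s
        · rw [h2, hws]; positivity
        · rw [hwo β' hβ'' h2]; simp
    · unfold bsimple
      rw [hlin, hwb β hβ]
    · have := hlin p β (σ⁻¹ β)
      rw [hwb β hβ] at this
      unfold bsimple
      simp only [Pi.neg_apply, neg_mul, Finset.sum_neg_distrib]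
      rw [this]; simp
  rw [hiT]
  have : ∑ β, (∑ i, c i • v i) β * w β = ∑ i, c i * ∑ β, v i β * w β := by
    simp only [Finset.sum_apply, Pi.smul_apply, smul_eq_mul, Finset.sum_mul, Finset.mul_sum]
    rw [Finset.sum_comm]
    simp only [mul_assoc]
  rw [this]
  exact Finset.sum_nonneg fun i _ => mul_nonneg (hc i) (hgen _ (hv i))

lemma D_mem (hT : tilde σ T = T) {p : ℕ} (hp : p.Prime) (κ : B → ℚ)
    (hκT : ∀ s ∈ T, κ s = 0) (hκ0 : ∀ s, 0 ≤ κ s) : κ ∈ D σ p T := by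
  have hst : ∀ s, 0 < steps σ s s := by
    intro s
    obtain ⟨k, hk, h1⟩ := exists_ret σ
    exact (Nat.sInf_mem (s := {n : ℕ | 0 < n ∧ (σ ^ n) s = s}) ⟨k, hk, by rw [h1]; rfl⟩).1
  let S := {s : B // s ∉ T}
  let q := Fintype.equivFin S
  refine ⟨Fintype.card S, fun i => κ (q.symm i).1 / ((p : ℚ) ^ steps σ (q.symm i).1 (q.symm i).1 - 1),
    fun i => hvec σ p (q.symm i).1 (q.symm i).1, ?_, ?_, ?_⟩
  · intro i
    apply div_nonneg (hκ0 _)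
    have := mul_p_le hp (hst (q.symm i).1)
    linarith
  · intro i
    left
    refine ⟨_, _, (q.symm i).2, ?_, ⟨0, by simp⟩, rfl⟩
    left
    rw [hT]
    exact (q.symm i).2
  · rw [Equiv.sum_comp q.symm (fun s : S => (κ s.1 / ((p : ℚ) ^ steps σ s.1 s.1 - 1)) •
      hvec σ p s.1 s.1)]
    have h1 : ∀ s : S, (κ s.1 / ((p : ℚ) ^ steps σ s.1 s.1 - 1)) • hvec σ p s.1 s.1
        = κ s.1 • e s.1 := by
      intro s
      have := mul_p_le hp (hst s.1)
      have h2 : (p : ℚ) ^ steps σ s.1 s.1 - 1 ≠ 0 := by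
        intro h; linarith
      ext x
      simp only [hvec, Pi.smul_apply, Pi.add_apply, Pi.neg_apply, smul_eq_mul]
      field_simp
      ring
    rw [Finset.sum_congr rfl (fun s _ => h1 s)]
    ext x
    rw [Finset.sum_apply]
    by_cases hx : x ∈ T
    · rw [hκT x hx, Finset.sum_eq_zero]
      rintro ⟨s, hs⟩ _
      have : x ≠ s := by rintro rfl; exact hs hx
      simp [e, this]
    · rw [Finset.sum_eq_single (⟨x, hx⟩ : S)]
      · simp [e]
      · rintro ⟨s, hs⟩ _ hne
        have : x ≠ s := by rintro rfl; exact hne rfl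
        simp [e, this]
      · simp

end aux

end GO

/-- if `T̃ = T` then
`𝒞^min_T = {Σ ℓ_β e_β ∈ ℚ^{𝔹−T} : p^{n_β} ℓ_{σ^{n_β}β} ≥ ℓ_β for all β ∈ 𝔹 − T}`. -/
theorem statement10 {B : Type*} [Fintype B] [DecidableEq B] [Nonempty B]
    (σ : Equiv.Perm B) (p : ℕ) (hp : p.Prime) (T : Set B)
    (hT : GO.tilde σ T = T) :
    GO.Cmin σ p T =
      {ℓ : {β : B // β ∉ T} → ℚ |
        ∀ β : {β : B // β ∉ T}, ∀ h : (σ ^ GO.nn σ T β.1) β.1 ∉ T,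
          ℓ β ≤ (p : ℚ) ^ GO.nn σ T β.1 * ℓ ⟨(σ ^ GO.nn σ T β.1) β.1, h⟩} := by
  obtain hspec := fun (s : B) (hs : s ∉ T) => GO.nn_spec hT hs
  ext ℓ
  constructor
  · rintro ⟨κ, ⟨hD, hf⟩, rfl⟩ ⟨s, hs⟩ h
    obtain ⟨h0, h1, h2⟩ := hspec s hs
    dsimp only at h ⊢
    by_cases hret : (σ ^ GO.nn σ T s) s = s
    · have hnn := GO.D_nonneg hT hp hD hs hret
      have he : (⟨(σ ^ GO.nn σ T s) s, h⟩ : {β : B // β ∉ T}) = ⟨s, hs⟩ := Subtype.ext hret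
      rw [he]
      have := GO.mul_p_le hp h0
      nlinarith
    · have := hf s ((GO.BT_iff hT hs).2 hret) s hs (Ne.symm hret)
      rw [GO.LTf_self hT p κ hs hret] at this
      linarith
  · intro hℓ
    let κ : B → ℚ := fun s => if h : s ∈ T then 0 else ℓ ⟨s, h⟩
    have hκT : ∀ s ∈ T, κ s = 0 := fun s hs => dif_pos hs
    have hκS : ∀ s (hs : s ∉ T), κ s = ℓ ⟨s, hs⟩ := fun s hs => dif_neg hs
    have hκ : ∀ s, s ∉ T → κ s ≤ (p : ℚ) ^ GO.nn σ T s * κ ((σ ^ GO.nn σ T s) s) := by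
      intro s hs
      rw [hκS s hs, hκS _ (hspec s hs).2.1]
      exact hℓ ⟨s, hs⟩ _
    have hiter : ∀ k : ℕ, ∀ s, s ∉ T → (σ ^ k) s ∉ T → κ s ≤ (p : ℚ) ^ k * κ ((σ ^ k) s) := by
      intro k
      induction k using Nat.strong_induction_on with
      | _ k ih =>
        intro s hs hk
        obtain ⟨h0, h1, h2⟩ := hspec s hs
        rcases Nat.eq_zero_or_pos k with rfl | hpos
        · simp
        · have hle : GO.nn σ T s ≤ k := by
            by_contra hc
            exact hk (h2 k hpos (by omega))
          have he : (σ ^ (k - GO.nn σ T s)) ((σ ^ GO.nn σ T s) s) = (σ ^ k) s := by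
            rw [GO.powpow, Nat.sub_add_cancel hle]
          have h3 := ih (k - GO.nn σ T s) (by omega) _ h1 (by rwa [he])
          rw [he] at h3
          have h4 : (p : ℚ) ^ k = (p : ℚ) ^ GO.nn σ T s * (p : ℚ) ^ (k - GO.nn σ T s) := by
            rw [← pow_add, Nat.add_sub_cancel' hle]
          rw [h4, mul_assoc]
          exact (hκ s hs).trans (mul_le_mul_of_nonneg_left h3 (by positivity))
    have hκ0 : ∀ s, 0 ≤ κ s := by
      intro s
      by_cases hs : s ∈ T
      · rw [hκT s hs]
      · obtain ⟨k, hk, h1⟩ := GO.exists_ret σ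
        have h2 := hiter k s hs (by rw [h1]; exact hs)
        rw [h1] at h2
        have h3 := GO.mul_p_le hp hk
        simp only [Equiv.Perm.coe_one, id] at h2
        by_contra hc
        push Not at hc
        nlinarith
    have hi : GO.iT σ p T κ = ℓ := by
      ext s
      obtain ⟨s, hs⟩ := s
      obtain ⟨h0, h1, h2⟩ := hspec s hs
      rw [GO.iT_eq hT, Finset.sum_eq_single 0]
      · simp [hκS s hs]
      · intro i hi hi0
        have hi' : i < GO.nn σ T s := by simpa using hi
        rw [hκT _ (h2 i (by omega) hi')]
        simp
      · intro h
        exact absurd (Finset.mem_range.2 h0) h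
    refine ⟨κ, ⟨GO.D_mem hT hp κ hκT hκ0, ?_⟩, hi⟩
    intro β hβ τ hτ _
    have hβT : β ∉ T := hβ.1
    by_cases hτβ : τ = β
    · subst hτβ
      rw [GO.LTf_self hT p κ hτ ((GO.BT_iff hT hτ).1 hβ), hi]
      have := hℓ ⟨τ, hτ⟩ (hspec τ hτ).2.1
      dsimp only at this
      linarith
    · exact GO.LTf_other hT κ hκT hκ0 hκ hβT hτ hτβ
end

section
/- For every T ⊆ 𝔹 and every β ∈ 𝔹(T), there is an integer δ ≥ 0 such that L_{T,f_β,β}(f_β(T)) = −2·p^{n_β+δ}; in particular L_{T,f_β,β}(f_β(T)) < 0 and f_β(T) ∉ 𝒟_{T,f_β}. -/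
/- Setting: `B` is the finite nonempty set 𝔹 equipped with a permutation `σ` (Frobenius),
and `p` is a prime.  Weights live in `ℚ^𝔹 = (B → ℚ)`.  The orbits `𝔹_𝔭` of `σ` are the sets
`orbit σ β`, and for `T ⊆ 𝔹` we have `T_𝔭 = T ∩ orbit σ β`. -/

open scoped Classical

namespace GO

lemma s11_powsub {B : Type*} (σ : Equiv.Perm B) (x : B) (i j : ℕ) (h : i ≤ j) :
    (σ ^ i) ((σ⁻¹ ^ j) x) = (σ⁻¹ ^ (j - i)) x := by
  obtain ⟨k, rfl⟩ := Nat.exists_eq_add_of_le h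
  rw [pow_add, Equiv.Perm.mul_apply, Nat.add_sub_cancel_left, inv_pow]
  simp

lemma s11_inj {B : Type*} (σ : Equiv.Perm B) (x : B) (i j : ℕ)
    (hi : i < Function.minimalPeriod σ x) (hj : j < Function.minimalPeriod σ x)
    (h : (σ ^ i) x = (σ ^ j) x) : i = j := by
  rw [← Equiv.Perm.iterate_eq_pow, ← Equiv.Perm.iterate_eq_pow] at h
  exact Function.iterate_injOn_Iio_minimalPeriod hi hj h

lemma s11_period {B : Type*} (σ : Equiv.Perm B) (x : B) :
    (σ ^ Function.minimalPeriod σ x) x = x := by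
  rw [← Equiv.Perm.iterate_eq_pow]; exact Function.iterate_minimalPeriod

lemma s11_mp {B : Type*} [Finite B] (σ : Equiv.Perm B) (x : B) (k : ℕ) :
    Function.minimalPeriod σ ((σ ^ k) x) = Function.minimalPeriod σ x := by
  rw [← Equiv.Perm.iterate_eq_pow]
  exact Function.minimalPeriod_apply_iterate
    (Function.Injective.mem_periodicPts σ.injective x) k

lemma s11_steps0 {B : Type*} (σ : Equiv.Perm B) (x : B) (N : ℕ)
    (hN : N < Function.minimalPeriod σ x) : steps0 σ x ((σ ^ N) x) = N := by
  have hm : N ∈ {n : ℕ | (σ ^ n) x = (σ ^ N) x} := rfl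
  have h1 : steps0 σ x ((σ ^ N) x) ≤ N := Nat.sInf_le hm
  have h2 : (σ ^ steps0 σ x ((σ ^ N) x)) x = (σ ^ N) x := Nat.sInf_mem ⟨N, hm⟩
  exact s11_inj σ x _ _ (by omega) hN h2

lemma s11_Lfun {B : Type*} [DecidableEq B] (σ : Equiv.Perm B) (p : ℕ) (ε : B → ℚ) (x : B)
    (N a b : ℕ) (u v : ℚ)
    (hN : N < Function.minimalPeriod σ x) (ha : a ≤ N) (hb : b ≤ N) :
    Lfun σ p ε x ((σ ^ N) x) (u • e ((σ ^ a) x) + v • e ((σ ^ b) x)) =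
      ε ((σ ^ a) x) * (p : ℚ) ^ a * u + ε ((σ ^ b) x) * (p : ℚ) ^ b * v := by
  have key : ∀ c ≤ N, ∀ w : ℚ, ∑ i ∈ Finset.range (N + 1),
      ε ((σ ^ i) x) * (p : ℚ) ^ i * (w * e ((σ ^ c) x) ((σ ^ i) x)) =
      ε ((σ ^ c) x) * (p : ℚ) ^ c * w := by
    intro c hc w
    rw [Finset.sum_eq_single c]
    · simp [e]
    · intro i hi hne
      have : (σ ^ i) x ≠ (σ ^ c) x := fun h =>
        hne (s11_inj σ x _ _ (by have := Finset.mem_range.1 hi; omega) (by omega) h)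
      simp [e, this]
    · intro h
      exact absurd (Finset.mem_range.2 (by omega)) h
  unfold Lfun
  rw [s11_steps0 σ x N hN, ← key a ha u, ← key b hb v, ← Finset.sum_add_distrib]
  refine Finset.sum_congr rfl fun i _ => ?_
  simp only [Pi.add_apply, Pi.smul_apply, smul_eq_mul]
  ring

lemma s11_mu {B : Type*} (σ : Equiv.Perm B) (T : Set B) (x : B) (k : ℕ) (hk : 0 < k)
    (h : (σ ^ k) x ∉ T) :
    0 < mu σ T x ∧ mu σ T x ≤ k ∧ (σ ^ mu σ T x) x ∉ T := by
  have ho : ¬ orbit σ x ⊆ T := fun hs => h (hs ⟨k, rfl⟩)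
  have hm : k ∈ {i : ℕ | 0 < i ∧ (σ ^ i) x ∉ T} := ⟨hk, h⟩
  unfold mu
  rw [if_neg ho]
  have := Nat.sInf_mem ⟨k, hm⟩
  exact ⟨this.1, Nat.sInf_le hm, this.2⟩

lemma s11_parity {B : Type*} (σ : Equiv.Perm B) (T : Set B) (x : B)
    (hx : x ∉ T) (hxt : x ∈ tilde σ T) : Odd (mu σ T x - 1) := by
  rcases hxt with h | h
  · exact absurd h hx
  simp only [Set.mem_iUnion] at h
  obtain ⟨C, ⟨γ, m, h1, h2, h3, rfl⟩, h4⟩ := h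
  have hinj : ∀ i ≤ m, ∀ j ≤ m, i < j → (σ⁻¹ ^ i) γ ≠ (σ⁻¹ ^ j) γ := by
    intro i hi j hj hij h
    have h5 := congrArg (σ ^ (i + 1)) h
    rw [s11_powsub σ γ (i + 1) j hij, pow_succ', Equiv.Perm.mul_apply,
      s11_powsub σ γ i i le_rfl] at h5
    simp only [Nat.sub_self, pow_zero, Equiv.Perm.one_apply] at h5
    exact h1 (h5 ▸ h3 _ (by omega))
  have hcard : ({τ | ∃ i ≤ m, τ = (σ⁻¹ ^ i) γ} : Set B).ncard = m + 1 := by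
    have : ({τ | ∃ i ≤ m, τ = (σ⁻¹ ^ i) γ} : Set B) =
        (fun i => (σ⁻¹ ^ i) γ) '' (↑(Finset.range (m + 1)) : Set ℕ) := by
      ext τ
      simp only [Set.mem_setOf_eq, Set.mem_image, Finset.coe_range, Set.mem_Iio, Nat.lt_succ_iff]
      exact ⟨fun ⟨i, h, h'⟩ => ⟨i, by omega, h'.symm⟩, fun ⟨i, h, h'⟩ => ⟨i, by omega, h'.symm⟩⟩
    rw [this, Set.ncard_image_of_injOn, Set.ncard_coe_finset, Finset.card_range]
    intro i hi j hj hij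
    simp only [Finset.coe_range, Set.mem_Iio] at hi hj
    by_contra hne
    rcases Nat.lt_or_gt_of_ne hne with h | h
    · exact hinj i (by omega) j (by omega) h hij
    · exact hinj j (by omega) i (by omega) h hij.symm
  have hCT : ∀ y, y ∈ ({τ | ∃ i ≤ m, τ = (σ⁻¹ ^ i) γ} : Set B) → y ∈ T := by
    rintro y ⟨i, hi, rfl⟩
    exact h3 i hi
  unfold chainExt at h4
  rw [hcard] at h4
  split_ifs at h4 with hodd
  · rcases h4 with h4 | ⟨y, ⟨i, hi, rfl⟩, h4⟩
    · exact absurd (hCT _ h4) hx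
    have hx' : x = (σ⁻¹ ^ (i + 1)) γ := by
      rw [← h4, pow_succ', Equiv.Perm.mul_apply]
    have him : i = m := by
      by_contra hne
      exact hx (hx' ▸ h3 (i + 1) (by omega))
    subst him
    have hend : (σ ^ (i + 2)) x ∉ T := by
      rw [hx', pow_succ', Equiv.Perm.mul_apply, s11_powsub σ γ (i + 1) (i + 1) le_rfl]
      simpa using h1
    obtain ⟨m1, m2, m3⟩ := s11_mu σ T x (i + 2) (by omega) hend
    have : mu σ T x = i + 2 := by
      by_contra hne
      apply m3
      have h6 : (σ ^ mu σ T x) x = (σ⁻¹ ^ (i + 1 - mu σ T x)) γ := by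
        have := s11_powsub σ γ (mu σ T x) (i + 1) (by omega)
        rwa [← hx'] at this
      rw [h6]
      exact h3 _ (by omega)
    rw [this]
    exact hodd
  · exact absurd (hCT _ h4) hx

lemma s11_nn {B : Type*} [Fintype B] (σ : Equiv.Perm B) (T : Set B) (β : B)
    (hβ : β ∈ BT σ T) : 0 < nn σ T β ∧ nn σ T β < Function.minimalPeriod σ β ∧
      (σ ^ nn σ T β) β ∉ tilde σ T := by
  obtain ⟨_, ⟨y, ⟨k, rfl⟩, hy⟩, hne⟩ := hβ
  have hd := s11_period σ β
  have hdpos : 0 < Function.minimalPeriod σ β :=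
    Function.minimalPeriod_pos_of_mem_periodicPts
      (Function.Injective.mem_periodicPts σ.injective β)
  set d := Function.minimalPeriod σ β with hdd
  have hmem : k + d ∈ {i : ℕ | 0 < i ∧ (σ ^ i) β ∉ tilde σ T} := by
    refine ⟨by omega, ?_⟩
    rwa [pow_add, Equiv.Perm.mul_apply, hd]
  obtain ⟨n1, n2⟩ : nn σ T β ∈ {i : ℕ | 0 < i ∧ (σ ^ i) β ∉ tilde σ T} := Nat.sInf_mem ⟨_, hmem⟩
  have hmin : ∀ i, 0 < i → (σ ^ i) β ∉ tilde σ T → nn σ T β ≤ i :=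
    fun i h h' => Nat.sInf_le ⟨h, h'⟩
  refine ⟨n1, ?_, n2⟩
  by_contra hge
  rw [not_lt] at hge
  have hall : ∀ j, (σ ^ j) β ∉ tilde σ T → (σ ^ j) β = β := by
    intro j hj
    have hmod : (σ ^ j) β = (σ ^ (j % d)) β := by
      rw [← Equiv.Perm.iterate_eq_pow, ← Equiv.Perm.iterate_eq_pow]
      exact (Function.iterate_mod_minimalPeriod_eq).symm
    rw [hmod] at hj ⊢
    rcases Nat.eq_zero_or_pos (j % d) with h0 | h0
    · simp [h0]
    · have := hmin _ h0 hj
      have := Nat.mod_lt j hdpos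
      omega
  apply hne
  ext z
  simp only [Set.mem_diff, Set.mem_singleton_iff]
  constructor
  · rintro ⟨⟨j, rfl⟩, hz⟩
    exact hall j hz
  · rintro rfl
    refine ⟨⟨0, rfl⟩, ?_⟩
    have := hall k hy
    rwa [this] at hy

lemma s11_main {B : Type*} [Fintype B] [DecidableEq B]
    (σ : Equiv.Perm B) (p : ℕ) (T : Set B) (β : B) (hβ : β ∈ BT σ T) :
    ∃ δ : ℕ, LTf σ p T β β (fvec σ p T β) = -2 * (p : ℚ) ^ (nn σ T β + δ) := by
  obtain ⟨n1, n2, n3⟩ := s11_nn σ T β hβ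
  have hβT : β ∉ T := hβ.1
  have hβ'T : (σ ^ nn σ T β) β ∉ T := fun h => n3 (Or.inl h)
  have hd := s11_period σ β
  have hmp := s11_mp σ β
  obtain ⟨m1, m2, m3⟩ := s11_mu σ T β _ n1 hβ'T
  have hoT : ¬ orbit σ β ⊆ tilde σ T := fun h => n3 (h ⟨_, rfl⟩)
  have hoT0 : ¬ orbit σ β ⊆ T := fun h => hβT (h ⟨0, rfl⟩)
  have e1 : epsTf σ T β β = - epsT σ T β := by
    unfold epsTf
    rw [if_pos ⟨0, m1, rfl⟩]
  have e2 : epsTf σ T β ((σ ^ nn σ T β) β) = 1 := by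
    unfold epsTf
    rw [if_neg]
    · unfold epsT
      rw [if_neg (fun h => hβ'T (h ⟨0, rfl⟩)), if_neg n3]
    · rintro ⟨i, hi, h⟩
      have := s11_inj σ β _ _ n2 (by omega) h
      omega
  have hback : (σ ^ (Function.minimalPeriod σ β - nn σ T β)) ((σ ^ nn σ T β) β) = β := by
    rw [← Equiv.Perm.mul_apply, ← pow_add, Nat.sub_add_cancel n2.le, hd]
  obtain ⟨k1, k2, k3⟩ := s11_mu σ T ((σ ^ nn σ T β) β) (Function.minimalPeriod σ β - nn σ T β)
    (by omega) (by rwa [hback])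
  unfold LTf fvec
  rw [if_pos rfl, if_neg hoT]
  by_cases hβt : β ∈ tilde σ T
  · rw [if_pos hβt, if_pos hβt]
    have hε : epsT σ T β = -1 := by
      unfold epsT
      rw [if_neg hoT0, if_pos hβt]
      exact (s11_parity σ T β hβT hβt).neg_one_pow
    rw [hε] at e1
    unfold fB Lfun1
    generalize mu σ T ((σ ^ nn σ T β) β) = m' at *
    generalize nn σ T β = n at *
    generalize hdd : Function.minimalPeriod σ β = d at *
    set x := (σ ^ m') ((σ ^ n) β) with hx
    have hxd : Function.minimalPeriod σ x = d := by
      rw [hx, s11_mp, s11_mp, hdd]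
    have hxβ : (σ ^ (d - n - m')) x = β := by
      rw [hx, ← Equiv.Perm.mul_apply, ← pow_add, Nat.sub_add_cancel k2, hback]
    have hxβ' : (σ ^ (d - m')) x = (σ ^ n) β := by
      have : d - m' = n + (d - n - m') := by omega
      rw [this, pow_add, Equiv.Perm.mul_apply, hxβ]
    have hxe : (σ ^ (d - 1)) x = σ⁻¹ x := by
      have h := s11_period σ x
      rw [hxd] at h
      rw [Equiv.Perm.eq_inv_iff_eq, ← Equiv.Perm.mul_apply, ← pow_succ',
        Nat.sub_add_cancel (by omega), h]
    have := s11_Lfun σ p (epsTf σ T β) x (d - 1) (d - m') (d - n - m') (-1) (-(p : ℚ) ^ n)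
      (by omega) (by omega) (by omega)
    rw [hxe, hxβ, hxβ', e1, e2] at this
    refine ⟨d - n - m', ?_⟩
    have hf : -(e ((σ ^ n) β) + (p : ℚ) ^ n • e β) =
        (-1 : ℚ) • e ((σ ^ n) β) + (-(p : ℚ) ^ n) • e β := by
      ext τ
      simp
      ring
    rw [hf, this]
    have : d - m' = n + (d - n - m') := by omega
    rw [this, pow_add]
    ring
  · rw [if_neg hβt, if_neg hβt]
    have hε : epsT σ T β = 1 := by
      unfold epsT
      rw [if_neg hoT0, if_neg hβt]
    rw [hε] at e1
    unfold fH
    generalize mu σ T ((σ ^ nn σ T β) β) = m' at *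
    generalize nn σ T β = n at *
    have hxe : (σ ^ (m' + n - 1)) β = σ⁻¹ ((σ ^ m') ((σ ^ n) β)) := by
      rw [Equiv.Perm.eq_inv_iff_eq, ← Equiv.Perm.mul_apply, ← pow_succ',
        Nat.sub_add_cancel (by omega), pow_add, Equiv.Perm.mul_apply]
    have := s11_Lfun σ p (epsTf σ T β) β (m' + n - 1) n 0 (-1) ((p : ℚ) ^ n)
      (by omega) (by omega) (by omega)
    rw [hxe, pow_zero, Equiv.Perm.one_apply, e1, e2] at this
    refine ⟨0, ?_⟩
    have hf : -(e ((σ ^ n) β)) + (p : ℚ) ^ n • e β =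
        (-1 : ℚ) • e ((σ ^ n) β) + ((p : ℚ) ^ n) • e β := by
      simp
    rw [hf, this]
    simp
    ring

end GO

/-- for `β ∈ 𝔹(T)`, there is `δ ≥ 0` with
`L_{T,f_β,β}(f_β(T)) = −2 p^{n_β+δ}`; in particular `L_{T,f_β,β}(f_β(T)) < 0` and
`f_β(T) ∉ 𝒟_{T,f_β}`. -/
theorem statement11 {B : Type*} [Fintype B] [DecidableEq B] [Nonempty B]
    (σ : Equiv.Perm B) (p : ℕ) (hp : p.Prime) (T : Set B) (β : B)
    (hβ : β ∈ GO.BT σ T) :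
    (∃ δ : ℕ, GO.LTf σ p T β β (GO.fvec σ p T β) = -2 * (p : ℚ) ^ (GO.nn σ T β + δ)) ∧
    GO.LTf σ p T β β (GO.fvec σ p T β) < 0 ∧
    GO.fvec σ p T β ∉ GO.Df σ p T β := by
  obtain ⟨δ, hδ⟩ := GO.s11_main σ p T β hβ
  have hp0 : (0 : ℚ) < p := by exact_mod_cast hp.pos
  have hneg : GO.LTf σ p T β β (GO.fvec σ p T β) < 0 := by
    rw [hδ]
    have := pow_pos hp0 (GO.nn σ T β + δ)
    linarith
  refine ⟨⟨δ, hδ⟩, hneg, fun h => ?_⟩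
  obtain ⟨n1, n2, n3⟩ := GO.s11_nn σ T β hβ
  refine absurd (h β hβ.1 ?_) (not_le.2 hneg)
  intro heq
  have := GO.s11_inj σ β 0 (GO.nn σ T β) (by omega) n2 heq
  omega
end

section
/- Let T ⊆ 𝔹, β ∈ 𝔹(T), and suppose {σ^iβ : 0 < i < n_β} ∩ (T̃ − T) = {σ^{r₁}β, …, σ^{r_t}β} with t ≥ 1 and 0 < r₁ < ⋯ < r_t < n_β. Set T′ = T ∪ {σ^{r_t}β}. Then T̃′ = T̃ (where T̃′ is constructed from T′ as T̃ is from T), β ∈ 𝔹(T′) with the same value of n_β, and 𝒟_{T′,f_β} ∩ {κ ∈ ℚ^𝔹 : L_{T,σ^{r_i}β}(κ) ≥ 0 for all 1 ≤ i ≤ t} ⊆ 𝒟_{T,f_β}. -/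
/- Setting: `B` is the finite nonempty set 𝔹 equipped with a permutation `σ` (Frobenius),
and `p` is a prime.  Weights live in `ℚ^𝔹 = (B → ℚ)`.  The orbits `𝔹_𝔭` of `σ` are the sets
`orbit σ β`, and for `T ⊆ 𝔹` we have `T_𝔭 = T ∩ orbit σ β`. -/

open scoped Classical

namespace GO

section aux
set_option linter.unusedSectionVars false
variable {B : Type*} [Fintype B] [DecidableEq B]

theorem ax_pow_add (σ : Equiv.Perm B) (i j : ℕ) (x : B) :
    (σ ^ (i + j)) x = (σ ^ i) ((σ ^ j) x) := by
  rw [pow_add, Equiv.Perm.mul_apply]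

theorem ax_cancel (σ : Equiv.Perm B) {i j : ℕ} {x y : B} (h : i ≤ j)
    (he : (σ ^ i) x = (σ ^ j) y) : x = (σ ^ (j - i)) y := by
  apply (σ ^ i).injective
  rw [he, ← ax_pow_add, Nat.add_sub_cancel' h]

theorem ax_period (σ : Equiv.Perm B) (x : B) : ∃ N : ℕ, 0 < N ∧ (σ ^ N) x = x :=
  ⟨orderOf σ, orderOf_pos σ, by rw [pow_orderOf_eq_one]; rfl⟩

theorem mu_eq_s12 (σ : Equiv.Perm B) (T : Set B) (x : B) (k : ℕ) (h0 : 0 < k)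
    (h1 : (σ ^ k) x ∉ T) (h2 : ∀ j, 0 < j → j < k → (σ ^ j) x ∈ T) : mu σ T x = k := by
  have hn : ¬ orbit σ x ⊆ T := fun h => h1 (h ⟨k, rfl⟩)
  rw [mu, if_neg hn]
  apply le_antisymm
  · exact Nat.sInf_le ⟨h0, h1⟩
  · by_contra hc
    have hm := Nat.sInf_mem (s := {i : ℕ | 0 < i ∧ (σ ^ i) x ∉ T}) ⟨k, h0, h1⟩
    exact hm.2 (h2 _ hm.1 (not_le.mp hc))

theorem mu_spec (σ : Equiv.Perm B) (T : Set B) (x : B) (hn : ¬ orbit σ x ⊆ T) :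
    0 < mu σ T x ∧ (σ ^ mu σ T x) x ∉ T ∧ ∀ j, 0 < j → j < mu σ T x → (σ ^ j) x ∈ T := by
  have hne : ({i : ℕ | 0 < i ∧ (σ ^ i) x ∉ T}).Nonempty := by
    rw [Set.not_subset] at hn
    obtain ⟨y, ⟨n, rfl⟩, hy⟩ := hn
    obtain ⟨N, hN, hx⟩ := ax_period σ x
    refine ⟨n + N, by omega, ?_⟩
    rw [ax_pow_add, hx]; exact hy
  rw [mu, if_neg hn]
  have hm := Nat.sInf_mem hne
  refine ⟨hm.1, hm.2, fun j hj hlt => ?_⟩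
  by_contra hc
  exact absurd (Nat.sInf_le (s := {i : ℕ | 0 < i ∧ (σ ^ i) x ∉ T}) ⟨hj, hc⟩) (by omega)

theorem not_orb (σ : Equiv.Perm B) (T : Set B) (x : B) (h : x ∉ T) : ¬ orbit σ x ⊆ T :=
  fun hs => h (hs ⟨0, rfl⟩)

theorem inv_pow_apply (σ : Equiv.Perm B) (i j : ℕ) (x : B) (h : i ≤ j) :
    (σ⁻¹ ^ i) ((σ ^ j) x) = (σ ^ (j - i)) x := by
  rw [inv_pow, Equiv.Perm.inv_eq_iff_eq, ← ax_pow_add, Nat.add_sub_cancel' h]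

theorem chain_ncard (σ : Equiv.Perm B) (T : Set B) (b : B) (m : ℕ) (h1 : σ b ∉ T)
    (h2 : ∀ i ≤ m, (σ⁻¹ ^ i) b ∈ T) :
    ({τ | ∃ i ≤ m, τ = (σ⁻¹ ^ i) b} : Set B).ncard = m + 1 := by
  have he : ({τ | ∃ i ≤ m, τ = (σ⁻¹ ^ i) b} : Set B)
      = (fun i : ℕ => (σ⁻¹ ^ i) b) '' (Finset.range (m + 1) : Set ℕ) := by
    ext τ
    simp only [Set.mem_ofPred_eq, Set.mem_image, Finset.coe_range, Set.mem_Iio, Nat.lt_succ_iff]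
    constructor
    · rintro ⟨i, hi, rfl⟩; exact ⟨i, hi, rfl⟩
    · rintro ⟨i, hi, rfl⟩; exact ⟨i, hi, rfl⟩
  have key : ∀ i j, i < j → j ≤ m → (σ⁻¹ ^ i) b ≠ (σ⁻¹ ^ j) b := by
    intro i j hij hj he
    have h3 := ax_cancel σ⁻¹ hij.le he
    apply h1
    have h4 : σ b = (σ⁻¹ ^ (j - i - 1)) b := by
      have : j - i = 1 + (j - i - 1) := by omega
      rw [this, ax_pow_add, pow_one, eq_comm, Equiv.Perm.inv_eq_iff_eq] at h3
      exact h3.symm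
    rw [h4]; exact h2 _ (by omega)
  rw [he, Set.InjOn.ncard_image, Set.ncard_coe_finset, Finset.card_range]
  intro i hi j hj hh
  simp only [Finset.coe_range, Set.mem_Iio] at hi hj
  rcases lt_trichotomy i j with h | h | h
  · exact absurd hh (key i j h (by omega))
  · exact h
  · exact absurd hh.symm (key j i h (by omega))

theorem tilde_iff (σ : Equiv.Perm B) (T : Set B) (x : B) (hx : x ∉ T) :
    x ∈ tilde σ T ↔ Even (mu σ T x) := by
  constructor
  · rintro (h | h)
    · exact absurd h hx
    · simp only [Set.mem_iUnion] at h
      obtain ⟨C, ⟨b, m, h1, h2, h3, rfl⟩, hC⟩ := h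
      rw [chainExt, chain_ncard σ T b m h1 h3] at hC
      have hnC : x ∉ ({τ | ∃ i ≤ m, τ = (σ⁻¹ ^ i) b} : Set B) := by
        rintro ⟨i, hi, rfl⟩; exact hx (h3 i hi)
      split_ifs at hC with hodd
      · rcases hC with hC | hC
        · exact absurd hC hnC
        · obtain ⟨y, ⟨i, hi, rfl⟩, rfl⟩ := hC
          have hxe : σ⁻¹ ((σ⁻¹ ^ i) b) = (σ⁻¹ ^ (i + 1)) b := by
            rw [add_comm, ax_pow_add, pow_one]
          rw [hxe] at hx ⊢
          have him : i = m := by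
            by_contra hne
            exact hx (h3 (i + 1) (by omega))
          subst him
          obtain ⟨y, rfl⟩ : ∃ y, (σ ^ (i + 1)) y = b := ⟨(σ ^ (i + 1))⁻¹ b, by simp⟩
          rw [inv_pow_apply σ _ _ _ le_rfl]
          have : mu σ T ((σ ^ (i + 1 - (i + 1))) y) = i + 2 := by
            simp only [Nat.sub_self, pow_zero, Equiv.Perm.one_apply]
            apply mu_eq_s12
            · omega
            · have : i + 2 = 1 + (i + 1) := by omega
              rw [this, ax_pow_add, pow_one]; exact h1
            · intro j hj hji
              have := h3 (i + 1 - j) (by omega)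
              rwa [inv_pow_apply σ _ _ _ (by omega),
                show i + 1 - (i + 1 - j) = j by omega] at this
          rw [this]
          have := Nat.odd_iff.mp hodd
          rw [Nat.even_iff]; omega
      · exact absurd hC hnC
  · intro hev
    obtain ⟨h0, h1, h2⟩ := mu_spec σ T x (not_orb σ T x hx)
    set k := mu σ T x with hk
    have hk2 := Nat.even_iff.mp hev
    right
    simp only [Set.mem_iUnion]
    have g1 : σ ((σ ^ (k - 1)) x) ∉ T := by
      have : σ ((σ ^ (k - 1)) x) = (σ ^ k) x := by
        conv_rhs => rw [show k = 1 + (k - 1) by omega, ax_pow_add, pow_one]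
      rw [this]; exact h1
    have g3 : ∀ i ≤ k - 2, (σ⁻¹ ^ i) ((σ ^ (k - 1)) x) ∈ T := by
      intro i hi
      rw [inv_pow_apply σ _ _ _ (by omega)]
      exact h2 _ (by omega) (by omega)
    have gx : (σ⁻¹ ^ (k - 2 + 1)) ((σ ^ (k - 1)) x) = x := by
      rw [inv_pow_apply σ _ _ _ (by omega), show k - 1 - (k - 2 + 1) = 0 by omega]; rfl
    refine ⟨_, ⟨(σ ^ (k - 1)) x, k - 2, g1, by rw [gx]; exact hx, g3, rfl⟩, ?_⟩
    rw [chainExt, chain_ncard σ T _ _ g1 g3, if_pos (by rw [Nat.odd_iff]; omega)]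
    right
    refine ⟨(σ⁻¹ ^ (k - 2)) ((σ ^ (k - 1)) x), ⟨k - 2, le_rfl, rfl⟩, ?_⟩
    rw [add_comm, ax_pow_add, pow_one] at gx
    exact gx

/-- effect of adding `ρ` on `mu` -/
theorem mu_add_ne (σ : Equiv.Perm B) (T : Set B) (ρ x : B) (hn : ¬ orbit σ x ⊆ T)
    (h : (σ ^ mu σ T x) x ≠ ρ) : mu σ (T ∪ {ρ}) x = mu σ T x := by
  obtain ⟨h0, h1, h2⟩ := mu_spec σ T x hn
  apply mu_eq_s12 _ _ _ _ h0
  · rintro (h' | h')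
    · exact h1 h'
    · exact h h'
  · intro j a b; exact Or.inl (h2 j a b)

theorem mu_add_eq (σ : Equiv.Perm B) (T : Set B) (ρ x : B) (hn : ¬ orbit σ x ⊆ T)
    (hρ : ρ ∉ T) (hne : (σ ^ mu σ T ρ) ρ ≠ ρ)
    (h : (σ ^ mu σ T x) x = ρ) : mu σ (T ∪ {ρ}) x = mu σ T x + mu σ T ρ := by
  obtain ⟨h0, h1, h2⟩ := mu_spec σ T x hn
  obtain ⟨g0, g1, g2⟩ := mu_spec σ T ρ (not_orb σ T ρ hρ)
  apply mu_eq_s12 _ _ _ _ (by omega)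
  · rw [add_comm, ax_pow_add, h]
    rintro (h' | h')
    · exact g1 h'
    · exact hne h'
  · intro j a b
    rcases lt_trichotomy j (mu σ T x) with c | c | c
    · exact Or.inl (h2 j a c)
    · right; rw [c, h]; rfl
    · left
      have := g2 (j - mu σ T x) (by omega) (by omega)
      rw [← h, ← ax_pow_add] at this
      rwa [Nat.sub_add_cancel c.le] at this

theorem orb_add (σ : Equiv.Perm B) (T : Set B) (ρ x : B)
    (hρ : ρ ∉ T) (hne : (σ ^ mu σ T ρ) ρ ≠ ρ) :
    orbit σ x ⊆ T ∪ {ρ} ↔ orbit σ x ⊆ T := by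
  constructor
  · intro h y hy
    rcases h hy with h' | h'
    · exact h'
    · exfalso
      obtain ⟨g0, g1, g2⟩ := mu_spec σ T ρ (not_orb σ T ρ hρ)
      obtain ⟨n, hn⟩ := hy
      have h'' : y = ρ := h'
      have : (σ ^ mu σ T ρ) ρ ∈ orbit σ x := by
        refine ⟨mu σ T ρ + n, ?_⟩
        rw [ax_pow_add, hn, h'']
      rcases h this with h3 | h3
      · exact g1 h3
      · exact hne h3
  · intro h; exact h.trans Set.subset_union_left

theorem mu_par (σ : Equiv.Perm B) (T : Set B) (ρ x : B) (hn : ¬ orbit σ x ⊆ T)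
    (hρ : ρ ∉ T) (hev : Even (mu σ T ρ)) (hne : (σ ^ mu σ T ρ) ρ ≠ ρ) :
    mu σ (T ∪ {ρ}) x % 2 = mu σ T x % 2 := by
  by_cases h : (σ ^ mu σ T x) x = ρ
  · rw [mu_add_eq σ T ρ x hn hρ hne h]
    have := Nat.even_iff.mp hev
    omega
  · rw [mu_add_ne σ T ρ x hn h]

theorem tilde_add (σ : Equiv.Perm B) (T : Set B) (ρ : B)
    (hρ : ρ ∉ T) (hev : Even (mu σ T ρ)) (hne : (σ ^ mu σ T ρ) ρ ≠ ρ) :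
    tilde σ (T ∪ {ρ}) = tilde σ T := by
  ext x
  by_cases hx : x ∈ T
  · exact ⟨fun _ => Or.inl hx, fun _ => Or.inl (Or.inl hx)⟩
  by_cases hxρ : x = ρ
  · subst hxρ
    exact ⟨fun _ => (tilde_iff σ T x hx).2 hev, fun _ => Or.inl (Or.inr rfl)⟩
  have hx' : x ∉ T ∪ {ρ} := by
    rintro (h | h)
    · exact hx h
    · exact hxρ h
  rw [tilde_iff σ _ x hx', tilde_iff σ T x hx, Nat.even_iff, Nat.even_iff,
    mu_par σ T ρ x (not_orb σ T x hx) hρ hev hne]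

theorem epsT_add (σ : Equiv.Perm B) (T : Set B) (ρ : B)
    (hρ : ρ ∉ T) (hev : Even (mu σ T ρ)) (hne : (σ ^ mu σ T ρ) ρ ≠ ρ) :
    epsT σ (T ∪ {ρ}) = epsT σ T := by
  funext x
  unfold epsT
  rw [tilde_add σ T ρ hρ hev hne]
  by_cases ho : orbit σ x ⊆ T
  · rw [if_pos ho, if_pos ((orb_add σ T ρ x hρ hne).2 ho)]
  have ho' : ¬ orbit σ x ⊆ T ∪ {ρ} := fun h => ho ((orb_add σ T ρ x hρ hne).1 h)
  rw [if_neg ho, if_neg ho']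
  split_ifs
  · have h1 := mu_par σ T ρ x ho hρ hev hne
    have h2 := (mu_spec σ T x ho).1
    have h3 := (mu_spec σ _ x ho').1
    rw [neg_one_pow_eq_pow_mod_two, neg_one_pow_eq_pow_mod_two (n := mu σ T x - 1)]
    congr 1
    omega
  · rfl

theorem steps0_spec (σ : Equiv.Perm B) (a b : B) (h : ∃ n : ℕ, (σ ^ n) a = b) :
    (σ ^ steps0 σ a b) a = b ∧ ∀ i, i < steps0 σ a b → (σ ^ i) a ≠ b := by
  refine ⟨Nat.sInf_mem (s := {n : ℕ | (σ ^ n) a = b}) h, fun i hi he => ?_⟩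
  exact absurd (Nat.sInf_le (s := {n : ℕ | (σ ^ n) a = b}) he) (not_le.mpr hi)

theorem steps0_inj (σ : Equiv.Perm B) (a b : B) (h : ∃ n : ℕ, (σ ^ n) a = b) (i j : ℕ)
    (hi : i < steps0 σ a b + 1) (hj : j < steps0 σ a b + 1) (he : (σ ^ i) a = (σ ^ j) a) :
    i = j := by
  obtain ⟨h1, h2⟩ := steps0_spec σ a b h
  have key : ∀ i j, i < j → j < steps0 σ a b + 1 → (σ ^ i) a ≠ (σ ^ j) a := by
    intro i j hij hj he
    apply h2 (steps0 σ a b - (j - i)) (by omega)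
    have e1 := ax_cancel σ hij.le he
    have e2 := congrArg (σ ^ (steps0 σ a b - (j - i))) e1
    rw [← ax_pow_add, Nat.sub_add_cancel (by omega), h1] at e2
    exact e2
  rcases lt_trichotomy i j with h | h | h
  · exact absurd he (key i j h hj)
  · exact h
  · exact absurd he.symm (key j i h hi)

theorem seg_sum (σ : Equiv.Perm B) (p : ℕ) (ε : B → ℚ) (κ : B → ℚ) (a ρ : B) (M k m : ℕ)
    (hinj : ∀ i j, i < M → j < M → (σ ^ i) a = (σ ^ j) a → i = j)
    (hk : (σ ^ k) a = ρ) (hkm : k + m ≤ M) :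
    ∑ i ∈ Finset.range M, (if ∃ j < m, (σ ^ i) a = (σ ^ j) ρ then 2 * ε ((σ ^ i) a) else 0)
        * (p : ℚ) ^ i * κ ((σ ^ i) a)
      = 2 * (p : ℚ) ^ k *
        ∑ j ∈ Finset.range m, ε ((σ ^ j) ρ) * (p : ℚ) ^ j * κ ((σ ^ j) ρ) := by
  have hsub : Finset.Ico k (k + m) ⊆ Finset.range M := by
    intro i hi; simp only [Finset.mem_Ico, Finset.mem_range] at *; omega
  rw [← Finset.sum_subset hsub, Finset.sum_Ico_eq_sum_range, Nat.add_sub_cancel_left,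
    Finset.mul_sum]
  · apply Finset.sum_congr rfl
    intro j hj
    have hj' := Finset.mem_range.mp hj
    have e1 : (σ ^ (k + j)) a = (σ ^ j) ρ := by rw [add_comm, ax_pow_add, hk]
    rw [e1, if_pos ⟨j, hj', rfl⟩, pow_add]
    ring
  · intro i hi hni
    rw [if_neg, zero_mul, zero_mul]
    rintro ⟨j, hj, he⟩
    rw [← hk, ← ax_pow_add] at he
    have := hinj i (j + k) (Finset.mem_range.mp hi) (by omega) he
    apply hni; rw [Finset.mem_Ico]; omega

theorem Lfun_seg (σ : Equiv.Perm B) (p : ℕ) (ε ε₁ ε₂ : B → ℚ) (κ : B → ℚ) (a b ρ : B) (k m : ℕ)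
    (hε : ∀ τ, ε₁ τ = ε₂ τ + (if ∃ j < m, τ = (σ ^ j) ρ then 2 * ε τ else 0))
    (hab : ∃ n : ℕ, (σ ^ n) a = b)
    (hk : (σ ^ k) a = ρ) (hkm : k + m ≤ steps0 σ a b + 1)
    (hpos : 0 ≤ ∑ j ∈ Finset.range m, ε ((σ ^ j) ρ) * (p : ℚ) ^ j * κ ((σ ^ j) ρ))
    (h2 : 0 ≤ Lfun σ p ε₂ a b κ) : 0 ≤ Lfun σ p ε₁ a b κ := by
  have e1 : Lfun σ p ε₁ a b κ = Lfun σ p ε₂ a b κ + 2 * (p : ℚ) ^ k *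
        ∑ j ∈ Finset.range m, ε ((σ ^ j) ρ) * (p : ℚ) ^ j * κ ((σ ^ j) ρ) := by
    rw [← seg_sum σ p ε κ a ρ (steps0 σ a b + 1) k m (steps0_inj σ a b hab) hk hkm]
    unfold Lfun
    rw [← Finset.sum_add_distrib]
    apply Finset.sum_congr rfl
    intro i _
    rw [hε]; ring
  rw [e1]
  have : (0 : ℚ) ≤ 2 * (p : ℚ) ^ k := by positivity
  have := mul_nonneg this hpos
  linarith

/-- the full-circle version -/
theorem Lfun1_seg (σ : Equiv.Perm B) (p : ℕ) (T : Set B) (ε ε₁ ε₂ : B → ℚ) (κ : B → ℚ)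
    (a ρ : B) (m : ℕ)
    (hε : ∀ τ, ε₁ τ = ε₂ τ + (if ∃ j < m, τ = (σ ^ j) ρ then 2 * ε τ else 0))
    (ha : a ∉ T) (hρ : ∀ j, 0 < j → j < m → (σ ^ j) ρ ∈ T)
    (hpos : 0 ≤ ∑ j ∈ Finset.range m, ε ((σ ^ j) ρ) * (p : ℚ) ^ j * κ ((σ ^ j) ρ))
    (h2 : 0 ≤ Lfun1 σ p ε₂ a κ) : 0 ≤ Lfun1 σ p ε₁ a κ := by
  obtain ⟨N, hN, hNa⟩ := ax_period σ a
  have hab : ∃ n : ℕ, (σ ^ n) a = σ⁻¹ a := by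
    refine ⟨N - 1, ?_⟩
    rw [Equiv.Perm.eq_inv_iff_eq]
    conv_rhs => rw [← hNa, show N = 1 + (N - 1) by omega, ax_pow_add, pow_one]
  unfold Lfun1 at h2 ⊢
  obtain ⟨g1, g2⟩ := steps0_spec σ a _ hab
  set S := steps0 σ a (σ⁻¹ a) with hS
  have gS : (σ ^ (S + 1)) a = a := by
    rw [add_comm, ax_pow_add, pow_one, g1]; simp
  by_cases hor : ∃ k : ℕ, (σ ^ k) a = ρ
  · obtain ⟨k, hk⟩ := hor
    have hk' : (σ ^ (k % (S + 1))) a = ρ := by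
      have hmul : ∀ q : ℕ, (σ ^ ((S + 1) * q)) a = a := by
        intro q
        induction q with
        | zero => rfl
        | succ q ih => rw [Nat.mul_succ, ax_pow_add, gS, ih]
      rw [← hk]
      conv_rhs => rw [← Nat.mod_add_div k (S + 1), ax_pow_add, hmul]
    have hlt : k % (S + 1) < S + 1 := Nat.mod_lt _ (by omega)
    set K := k % (S + 1)
    refine Lfun_seg σ p ε ε₁ ε₂ κ a _ ρ K m hε hab hk' ?_ hpos h2
    by_contra hc
    rw [← hS] at hc
    apply ha
    have : a = (σ ^ (S + 1 - K)) ρ := by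
      rw [← hk', ← ax_pow_add, Nat.sub_add_cancel hlt.le, gS]
    rw [this]
    exact hρ _ (by omega) (by omega)
  · have : Lfun σ p ε₁ a (σ⁻¹ a) κ = Lfun σ p ε₂ a (σ⁻¹ a) κ := by
      unfold Lfun
      apply Finset.sum_congr rfl
      intro i _
      rw [hε, if_neg, add_zero]
      rintro ⟨j, hj, he⟩
      apply hor
      obtain ⟨M, hM, hMρ⟩ := ax_period σ ρ
      have hmul : ∀ q : ℕ, (σ ^ (M * q)) ρ = ρ := by
        intro q
        induction q with
        | zero => rfl
        | succ q ih => rw [Nat.mul_succ, ax_pow_add, hMρ, ih]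
      refine ⟨(M * j - j) + i, ?_⟩
      rw [ax_pow_add, he, ← ax_pow_add, Nat.sub_add_cancel (Nat.le_mul_of_pos_left j hM), hmul]
    rw [this]; exact h2

end aux

end GO

/-- let `β ∈ 𝔹(T)` and suppose
`{σ^iβ : 0 < i < n_β} ∩ (T̃ − T) = {σ^{r₁}β, …, σ^{r_t}β}` with `t ≥ 1` (here `t = s+1`)
and `0 < r₁ < ⋯ < r_t < n_β`.  Set `T′ = T ∪ {σ^{r_t}β}`.  Then `T̃′ = T̃`, `β ∈ 𝔹(T′)`
with the same `n_β`, and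
`𝒟_{T′,f_β} ∩ {κ : L_{T,σ^{r_i}β}(κ) ≥ 0 ∀i} ⊆ 𝒟_{T,f_β}`. -/
theorem statement12 {B : Type*} [Fintype B] [DecidableEq B] [Nonempty B]
    (σ : Equiv.Perm B) (p : ℕ) (hp : p.Prime) (T : Set B) (β : B)
    (hβ : β ∈ GO.BT σ T)
    (s : ℕ) (r : Fin (s + 1) → ℕ) (hmono : StrictMono r)
    (hpos : ∀ i, 0 < r i) (hlt : ∀ i, r i < GO.nn σ T β)
    (hset : {τ : B | ∃ i, 0 < i ∧ i < GO.nn σ T β ∧ τ = (σ ^ i) β} ∩ (GO.tilde σ T \ T)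
      = {τ : B | ∃ i : Fin (s + 1), τ = (σ ^ r i) β}) :
    GO.tilde σ (T ∪ {(σ ^ r (Fin.last s)) β}) = GO.tilde σ T ∧
    β ∈ GO.BT σ (T ∪ {(σ ^ r (Fin.last s)) β}) ∧
    GO.nn σ (T ∪ {(σ ^ r (Fin.last s)) β}) β = GO.nn σ T β ∧
    (GO.Df σ p (T ∪ {(σ ^ r (Fin.last s)) β}) β ∩
        {κ : B → ℚ | ∀ i : Fin (s + 1), 0 ≤ GO.LT σ p T ((σ ^ r i) β) κ}
      ⊆ GO.Df σ p T β) := by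
  classical
  obtain ⟨hβT, hne1, hne2⟩ := hβ
  -- facts on n
  have hnne : ({i : ℕ | 0 < i ∧ (σ ^ i) β ∉ GO.tilde σ T}).Nonempty := by
    obtain ⟨y, ⟨j, rfl⟩, hy⟩ := hne1
    obtain ⟨N, hN, hx⟩ := GO.ax_period σ β
    refine ⟨j + N, by omega, ?_⟩
    rw [GO.ax_pow_add, hx]; exact hy
  have hn0 : 0 < GO.nn σ T β ∧ (σ ^ GO.nn σ T β) β ∉ GO.tilde σ T := Nat.sInf_mem hnne
  have hnlt : ∀ j, 0 < j → j < GO.nn σ T β → (σ ^ j) β ∈ GO.tilde σ T := by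
    intro j hj hlt
    by_contra hc
    exact absurd (Nat.sInf_le (s := {i : ℕ | 0 < i ∧ (σ ^ i) β ∉ GO.tilde σ T}) ⟨hj, hc⟩)
      (not_le.mpr hlt)
  have hnn' : GO.tilde σ (T ∪ {(σ ^ r (Fin.last s)) β}) = GO.tilde σ T →
      GO.nn σ (T ∪ {(σ ^ r (Fin.last s)) β}) β = GO.nn σ T β := by
    intro h; unfold GO.nn; rw [h]
  set n := GO.nn σ T β with hn
  obtain ⟨hn0, hnt⟩ := hn0
  have hTt : T ⊆ GO.tilde σ T := Set.subset_union_left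
  have hnT : (σ ^ n) β ∉ T := fun h => hnt (hTt h)
  have hmem : ∀ i, 0 < i → i < n → (σ ^ i) β ∉ T → ∃ q, (σ ^ i) β = (σ ^ r q) β := by
    intro i h0 h1 h2
    have : (σ ^ i) β ∈ {τ : B | ∃ i : Fin (s + 1), τ = (σ ^ r i) β} := by
      rw [← hset]; exact ⟨⟨i, h0, h1, rfl⟩, hnlt i h0 h1, h2⟩
    exact this
  have hinj : ∀ i j, i < j → j < n → (σ ^ i) β ≠ (σ ^ j) β := by
    intro i j hij hj he
    have e1 := GO.ax_cancel σ hij.le he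
    have e2 := congrArg (σ ^ (n - (j - i))) e1
    rw [← GO.ax_pow_add, Nat.sub_add_cancel (by omega)] at e2
    exact hnt (e2 ▸ hnlt _ (by omega) (by omega))
  have hβne : (σ ^ n) β ≠ β := by
    intro he
    have hmul : ∀ q : ℕ, (σ ^ (n * q)) β = β := by
      intro q
      induction q with
      | zero => rfl
      | succ q ih => rw [Nat.mul_succ, GO.ax_pow_add, he, ih]
    apply hne2
    ext y
    constructor
    · rintro ⟨⟨k, rfl⟩, hy⟩
      rw [← Nat.mod_add_div k n, GO.ax_pow_add, hmul] at hy ⊢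
      have hk := Nat.mod_lt k hn0
      rcases Nat.eq_zero_or_pos (k % n) with h | h
      · rw [h]; rfl
      · exact absurd (hnlt _ h hk) hy
    · intro hy
      have hy' : y = β := hy
      subst hy'
      exact ⟨⟨0, rfl⟩, by rw [he] at hnt; exact hnt⟩
  -- facts on ρ
  have hR0 := hpos (Fin.last s)
  have hRn := hlt (Fin.last s)
  have hRmax : ∀ q, r q ≤ r (Fin.last s) := fun q => hmono.monotone (Fin.le_last q)
  have hρm : (σ ^ r (Fin.last s)) β ∈ GO.tilde σ T \ T := by
    have : (σ ^ r (Fin.last s)) β ∈ {τ : B | ∃ i : Fin (s + 1), τ = (σ ^ r i) β} :=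
      ⟨Fin.last s, rfl⟩
    rw [← hset] at this
    exact this.2
  have hκ0 : ∀ κ : B → ℚ, (∀ i : Fin (s + 1), 0 ≤ GO.LT σ p T ((σ ^ r i) β) κ) →
      0 ≤ GO.LT σ p T ((σ ^ r (Fin.last s)) β) κ := fun κ h => h _
  set R := r (Fin.last s) with hR
  set ρ := (σ ^ R) β with hρ
  obtain ⟨hρt, hρT⟩ := hρm
  have hρj : ∀ j, (σ ^ j) ρ = (σ ^ (j + R)) β := fun j => by rw [GO.ax_pow_add]
  have hρin : ∀ j, 0 < j → j < n - R → (σ ^ j) ρ ∈ T := by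
    intro j h0 h1
    by_contra hc
    rw [hρj] at hc
    obtain ⟨q, hq⟩ := hmem (j + R) (by omega) (by omega) hc
    have := hRmax q
    exact hinj (r q) (j + R) (by omega) (by omega) hq.symm
  have hρn : (σ ^ (n - R)) ρ = (σ ^ n) β := by rw [hρj, Nat.sub_add_cancel hRn.le]
  have hmuρ : GO.mu σ T ρ = n - R := by
    apply GO.mu_eq_s12 σ T ρ _ (by omega)
    · rw [hρn]; exact hnT
    · exact hρin
  have hev : Even (GO.mu σ T ρ) := (GO.tilde_iff σ T ρ hρT).1 hρt
  have hne : (σ ^ GO.mu σ T ρ) ρ ≠ ρ := by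
    rw [hmuρ, hρn]; intro h; rw [h] at hnt; exact hnt hρt
  have htil := GO.tilde_add σ T ρ hρT hev hne
  have heps := GO.epsT_add σ T ρ hρT hev hne
  have hρβ : β ≠ ρ := hinj 0 R hR0 hRn
  have hβT' : β ∉ T ∪ {ρ} := by
    rintro (h | h)
    · exact hβT h
    · exact hρβ h
  refine ⟨htil, ⟨hβT', by rw [htil]; exact hne1, by rw [htil]; exact hne2⟩, hnn' htil, ?_⟩
  have hnn' := hnn' htil
  rintro κ ⟨hD, hL⟩ τ hτT hτn
  have hD' : ∀ τ, τ ∉ T ∪ {ρ} → τ ≠ (σ ^ n) β → 0 ≤ GO.LTf σ p (T ∪ {ρ}) β τ κ := by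
    intro τ h1 h2
    exact hD τ h1 (by rw [hnn']; exact h2)
  rw [← hn] at hτn
  by_cases hτq : ∃ q, τ = (σ ^ r q) β
  · obtain ⟨q, rfl⟩ := hτq
    have hb : (σ ^ r q) β ≠ β := fun h => hinj 0 (r q) (hpos q) (hlt q) h.symm
    rw [GO.LTf, if_neg hb, if_pos (hnlt _ (hpos q) (hlt q))]
    exact hL q
  have hτρ : τ ≠ ρ := fun h => hτq ⟨Fin.last s, h⟩
  have hτT' : τ ∉ T ∪ {ρ} := by
    rintro (h | h)
    · exact hτT h
    · exact hτρ h
  have hDτ := hD' τ hτT' hτn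
  -- β' and its mu
  set β' := (σ ^ n) β with hβ'
  obtain ⟨m0, m1, m2⟩ := GO.mu_spec σ T β' (GO.not_orb σ T _ hnT)
  have hq : ∀ q, 0 < q → q < n → (σ ^ q) β ≠ (σ ^ GO.mu σ T β') β' := by
    intro q h0 h1 he
    rcases lt_or_ge q (GO.mu σ T β') with h | h
    · have := GO.ax_cancel σ h.le he
      exact hβT (this ▸ m2 _ (by omega) (by omega))
    · have e2 := GO.ax_cancel σ h he.symm
      rcases Nat.eq_zero_or_pos (q - GO.mu σ T β') with h3 | h3
      · rw [h3] at e2; exact hβne e2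
      · rw [e2] at hnt; exact hnt (hnlt _ h3 (by omega))
  have hmuβ' : GO.mu σ (T ∪ {ρ}) β' = GO.mu σ T β' :=
    GO.mu_add_ne σ T ρ β' (GO.not_orb σ T _ hnT) (fun h => hq R hR0 hRn h.symm)
  -- mu of τ
  have hmuτ : τ ≠ β → GO.mu σ (T ∪ {ρ}) τ = GO.mu σ T τ := by
    intro hτβ
    apply GO.mu_add_ne σ T ρ τ (GO.not_orb σ T _ hτT)
    obtain ⟨k0, k1, k2⟩ := GO.mu_spec σ T τ (GO.not_orb σ T _ hτT)
    intro he
    rcases lt_or_ge R (GO.mu σ T τ) with h | h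
    · have := GO.ax_cancel σ h.le he.symm
      exact hβT (this ▸ k2 _ (by omega) (by omega))
    · have e2 := GO.ax_cancel σ h he
      rcases Nat.eq_zero_or_pos (R - GO.mu σ T τ) with h3 | h3
      · rw [h3] at e2; exact hτβ e2
      · apply hτq
        rw [e2]
        exact hmem _ h3 (by omega) (by rw [← e2]; exact hτT)
  have hLT : τ ≠ β → GO.LT σ p (T ∪ {ρ}) τ κ = GO.LT σ p T τ κ := by
    intro h
    unfold GO.LT
    rw [htil, heps, hmuτ h]
  -- positivity of the block sum
  have hblock : 0 ≤ ∑ j ∈ Finset.range (n - R),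
      GO.epsT σ T ((σ ^ j) ρ) * (p : ℚ) ^ j * κ ((σ ^ j) ρ) := by
    have h := hκ0 κ hL
    rw [GO.LT, if_pos hρt, hmuρ, GO.Lfun] at h
    have hs : GO.steps0 σ ρ ((σ ^ (n - R - 1)) ρ) = n - R - 1 := by
      have hle : GO.steps0 σ ρ ((σ ^ (n - R - 1)) ρ) ≤ n - R - 1 := Nat.sInf_le rfl
      obtain ⟨e1, -⟩ := GO.steps0_spec σ ρ ((σ ^ (n - R - 1)) ρ) ⟨_, rfl⟩
      by_contra hc
      exact hinj _ _ (by omega) (by omega) ((hρj _).symm.trans (e1.trans (hρj _)))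
    rw [hs, show n - R - 1 + 1 = n - R by omega] at h
    exact h
  -- two cases
  have hβo := GO.not_orb σ T β hβT
  obtain ⟨b0, b1, b2⟩ := GO.mu_spec σ T β hβo
  have hε : ∃ m, (m = 0 ∨ m = n - R) ∧ ∀ τ, GO.epsTf σ T β τ = GO.epsTf σ (T ∪ {ρ}) β τ +
      (if ∃ j < m, τ = (σ ^ j) ρ then 2 * GO.epsT σ T τ else 0) := by
    by_cases hc : (σ ^ GO.mu σ T β) β = ρ
    · refine ⟨n - R, Or.inr rfl, fun x => ?_⟩
      have hmR : GO.mu σ T β = R := by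
        have h1 : GO.mu σ T β ≤ R := by
          by_contra hlt'
          exact hρT (b2 R hR0 (by omega))
        by_contra h2
        exact hinj _ R (by omega) hRn hc
      have hmR' : GO.mu σ (T ∪ {ρ}) β = n := by
        rw [GO.mu_add_eq σ T ρ β hβo hρT hne hc, hmuρ, hmR]; omega
      unfold GO.epsTf
      rw [heps, hmR, hmR']
      by_cases c1 : ∃ i < R, x = (σ ^ i) β
      · obtain ⟨i, hi, rfl⟩ := c1
        rw [if_pos ⟨i, hi, rfl⟩, if_pos ⟨i, by omega, rfl⟩, if_neg, add_zero]
        rintro ⟨j, hj, he⟩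
        rw [hρj] at he
        exact hinj i (j + R) (by omega) (by omega) he
      · rw [if_neg c1]
        by_cases c2 : ∃ j < n - R, x = (σ ^ j) ρ
        · rw [if_pos c2]
          obtain ⟨j, hj, he⟩ := c2
          rw [if_pos ⟨j + R, by omega, by rw [he, hρj]⟩]
          ring
        · rw [if_neg c2, if_neg, add_zero]
          rintro ⟨i, hi, he⟩
          rcases lt_or_ge i R with h | h
          · exact c1 ⟨i, h, he⟩
          · exact c2 ⟨i - R, by omega, by rw [hρj, Nat.sub_add_cancel h, he]⟩
    · refine ⟨0, Or.inl rfl, fun x => ?_⟩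
      have hmR' := GO.mu_add_ne σ T ρ β hβo hc
      unfold GO.epsTf
      rw [heps, hmR', if_neg (c := ∃ j < 0, x = (σ ^ j) ρ) (by simp), add_zero]
  obtain ⟨m, hm, hε⟩ := hε
  have hmle : m ≤ n - R := by omega
  have hblock' : 0 ≤ ∑ j ∈ Finset.range m,
      GO.epsT σ T ((σ ^ j) ρ) * (p : ℚ) ^ j * κ ((σ ^ j) ρ) := by
    rcases hm with h | h
    · rw [h]; simp
    · rw [h]; exact hblock
  have hρin' : ∀ j, 0 < j → j < m → (σ ^ j) ρ ∈ T := fun j h0 h1 => hρin j h0 (by omega)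
  have hL1 : ∀ a, a ∉ T → 0 ≤ GO.Lfun1 σ p (GO.epsTf σ (T ∪ {ρ}) β) a κ →
      0 ≤ GO.Lfun1 σ p (GO.epsTf σ T β) a κ := fun a ha h =>
    GO.Lfun1_seg σ p T (GO.epsT σ T) _ _ κ a ρ m hε ha hρin' hblock' h
  unfold GO.LTf at hDτ ⊢
  rw [hnn', htil] at hDτ
  rw [← hn]
  rw [← hβ', hmuβ'] at hDτ
  rw [← hβ']
  by_cases hτβ : τ = β
  · rw [if_pos hτβ] at hDτ ⊢
    by_cases hβt : β ∈ GO.tilde σ T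
    · rw [if_pos hβt] at hDτ ⊢
      exact hL1 _ m1 hDτ
    · rw [if_neg hβt] at hDτ ⊢
      have hab : ∃ k : ℕ, (σ ^ k) β = σ⁻¹ ((σ ^ GO.mu σ T β') β') := by
        refine ⟨GO.mu σ T β' - 1 + n, ?_⟩
        rw [Equiv.Perm.eq_inv_iff_eq, GO.ax_pow_add, ← hβ']
        conv_rhs => rw [show GO.mu σ T β' = 1 + (GO.mu σ T β' - 1) by omega, GO.ax_pow_add,
          pow_one]
      refine GO.Lfun_seg σ p (GO.epsT σ T) _ _ κ β _ ρ R m hε hab hρ.symm ?_ hblock' hDτ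
      obtain ⟨e1, -⟩ := GO.steps0_spec σ _ _ hab
      by_contra hc
      refine hq (GO.steps0 σ β (σ⁻¹ ((σ ^ GO.mu σ T β') β')) + 1) (Nat.succ_pos _) ?_ ?_
      · omega
      · rw [add_comm, GO.ax_pow_add, e1, pow_one]; simp
  · rw [if_neg hτβ] at hDτ ⊢
    by_cases hτt : τ ∈ GO.tilde σ T
    · rw [if_pos hτt] at hDτ ⊢
      rw [← hLT hτβ]; exact hDτ
    · rw [if_neg hτt] at hDτ ⊢
      rw [hmuτ hτβ] at hDτ
      exact hL1 _ (GO.mu_spec σ T τ (GO.not_orb σ T _ hτT)).2.1 hDτ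
end

section
/- Let T ⊆ 𝔹 and let 𝔹_𝔭 be an orbit with 𝔹_𝔭 − T̃_𝔭 ≠ ∅. Then e_β ∈ 𝒟′_T for every β ∈ 𝔹_𝔭 − T̃_𝔭, and −e_β ∈ 𝒟′_T for every β ∈ T̃_𝔭 − T_𝔭. -/
/- Setting: `B` is the finite nonempty set 𝔹 equipped with a permutation `σ` (Frobenius),
and `p` is a prime.  Weights live in `ℚ^𝔹 = (B → ℚ)`.  The orbits `𝔹_𝔭` of `σ` are the sets
`orbit σ β`, and for `T ⊆ 𝔹` we have `T_𝔭 = T ∩ orbit σ β`. -/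

open scoped Classical

theorem cone_zero_aux {V : Type*} [AddCommMonoid V] [Module ℚ V] (S : Set V) :
    (0 : V) ∈ GO.cone S :=
  ⟨0, Fin.elim0, Fin.elim0, fun i => i.elim0, fun i => i.elim0, by simp⟩

theorem cone_add_aux {V : Type*} [AddCommMonoid V] [Module ℚ V] {S : Set V} {x y : V}
    (hx : x ∈ GO.cone S) (hy : y ∈ GO.cone S) : x + y ∈ GO.cone S := by
  obtain ⟨n, c, v, hc, hv, rfl⟩ := hx
  obtain ⟨m, d, w, hd, hw, rfl⟩ := hy
  refine ⟨n + m, Fin.append c d, Fin.append v w, ?_, ?_, ?_⟩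
  · intro i
    refine Fin.addCases (fun i => ?_) (fun i => ?_) i
    · simpa using hc i
    · simpa using hd i
  · intro i
    refine Fin.addCases (fun i => ?_) (fun i => ?_) i
    · simpa using hv i
    · simpa using hw i
  · simp [Fin.sum_univ_add]

theorem cone_smul_aux {V : Type*} [AddCommMonoid V] [Module ℚ V] {S : Set V} {x : V}
    (a : ℚ) (ha : 0 ≤ a) (hx : x ∈ GO.cone S) : a • x ∈ GO.cone S := by
  obtain ⟨n, c, v, hc, hv, rfl⟩ := hx
  refine ⟨n, fun i => a * c i, v, fun i => mul_nonneg ha (hc i), hv, ?_⟩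
  simp [Finset.smul_sum, mul_smul]

theorem cone_gen_aux {V : Type*} [AddCommMonoid V] [Module ℚ V] {S : Set V} {x : V}
    (hx : x ∈ S) : x ∈ GO.cone S :=
  ⟨1, fun _ => 1, fun _ => x, fun _ => zero_le_one, fun _ => hx, by simp⟩

theorem chain_aux {B : Type*} [Fintype B] [DecidableEq B]
    (σ : Equiv.Perm B) (p : ℕ) (T : Set B) (m : ℕ) :
    ∀ β : B, β ∉ GO.tilde σ T → (σ ^ m) β ∉ GO.tilde σ T →
      ((p : ℚ) ^ m) • GO.e β - GO.e ((σ ^ m) β) ∈ GO.D' σ p T := by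
  induction m using Nat.strong_induction_on with
  | _ m ih =>
    intro β hβ hm
    rcases Nat.eq_zero_or_pos m with rfl | hpos
    · simpa [GO.D'] using cone_zero_aux (GO.D'gen σ p T)
    have hne : {i : ℕ | 0 < i ∧ (σ ^ i) β ∉ GO.tilde σ T}.Nonempty := ⟨m, hpos, hm⟩
    have hmem : 0 < GO.nn σ T β ∧ (σ ^ GO.nn σ T β) β ∉ GO.tilde σ T := Nat.sInf_mem hne
    have hle : GO.nn σ T β ≤ m := Nat.sInf_le ⟨hpos, hm⟩
    have hgen : GO.fH σ p T β ∈ GO.D' σ p T :=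
      cone_gen_aux (Or.inl (Or.inl (Or.inl ⟨β, hβ, rfl⟩)))
    unfold GO.fH at hgen
    generalize GO.nn σ T β = n at *
    obtain ⟨k, rfl⟩ := Nat.exists_eq_add_of_le' hle
    have hk : (σ ^ k) ((σ ^ n) β) = (σ ^ (k + n)) β := by rw [pow_add]; rfl
    have h1 := ih k (by omega) ((σ ^ n) β) hmem.2 (by rw [hk]; exact hm)
    rw [hk] at h1
    have h2 := cone_add_aux h1 (cone_smul_aux ((p : ℚ) ^ k) (by positivity) hgen)
    change _ ∈ GO.D' σ p T at h2
    convert h2 using 1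
    rw [smul_add, smul_smul, ← pow_add, smul_neg]
    abel

theorem first_aux {B : Type*} [Fintype B] [DecidableEq B]
    (σ : Equiv.Perm B) (p : ℕ) (hp : p.Prime) (T : Set B) (β : B)
    (hβ : β ∉ GO.tilde σ T) : GO.e β ∈ GO.D' σ p T := by
  have h := chain_aux σ p T (orderOf σ) β hβ (by simpa [pow_orderOf_eq_one] using hβ)
  rw [pow_orderOf_eq_one, Equiv.Perm.one_apply] at h
  have hgt : (1 : ℚ) < (p : ℚ) ^ orderOf σ :=
    one_lt_pow₀ (by exact_mod_cast hp.one_lt) (orderOf_pos σ).ne'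
  have hpos : (0 : ℚ) < (p : ℚ) ^ orderOf σ - 1 := by linarith
  have h2 := cone_smul_aux ((p : ℚ) ^ orderOf σ - 1)⁻¹ (by positivity) h
  have h3 : ((p : ℚ) ^ orderOf σ) • GO.e β - GO.e β = ((p : ℚ) ^ orderOf σ - 1) • GO.e β := by
    rw [sub_smul, one_smul]
  rw [h3, smul_smul, inv_mul_cancel₀ hpos.ne', one_smul] at h2
  exact h2

/-- let `𝔹_𝔭` be an orbit with `𝔹_𝔭 − T̃_𝔭 ≠ ∅`.  Then `e_β ∈ 𝒟′_T` for
every `β ∈ 𝔹_𝔭 − T̃_𝔭`, and `−e_β ∈ 𝒟′_T` for every `β ∈ T̃_𝔭 − T_𝔭`. -/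
theorem statement14 {B : Type*} [Fintype B] [DecidableEq B] [Nonempty B]
    (σ : Equiv.Perm B) (p : ℕ) (hp : p.Prime) (T : Set B) (β : B)
    (horb : ∃ τ ∈ GO.orbit σ β, τ ∉ GO.tilde σ T) :
    (β ∉ GO.tilde σ T → GO.e β ∈ GO.D' σ p T) ∧
    (β ∈ GO.tilde σ T \ T → -(GO.e β) ∈ GO.D' σ p T) := by
  refine ⟨first_aux σ p hp T β, ?_⟩
  rintro ⟨hβ, hT⟩
  obtain ⟨τ, ⟨k, rfl⟩, hτ⟩ := horb
  have hk : 0 < k := by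
    rcases Nat.eq_zero_or_pos k with rfl | h
    · exact absurd hβ (by simpa using hτ)
    · exact h
  have hne : {i : ℕ | 0 < i ∧ (σ ^ i) β ∉ GO.tilde σ T}.Nonempty := ⟨k, hk, hτ⟩
  have hmem : 0 < GO.nn σ T β ∧ (σ ^ GO.nn σ T β) β ∉ GO.tilde σ T := Nat.sInf_mem hne
  have hgen : -(GO.fB σ p T β) ∈ GO.D' σ p T :=
    cone_gen_aux (Or.inl (Or.inl (Or.inr ⟨β, hβ, hT, fun h => hτ (h ⟨k, rfl⟩), rfl⟩)))
  have h1 := cone_add_aux (first_aux σ p hp T _ hmem.2) hgen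
  unfold GO.fB at h1
  have hp0 : (0 : ℚ) < p := by exact_mod_cast hp.pos
  have hpos : (0 : ℚ) < (p : ℚ) ^ GO.nn σ T β := by positivity
  have h2 := cone_smul_aux ((p : ℚ) ^ GO.nn σ T β)⁻¹ (by positivity) h1
  rw [neg_add, add_neg_cancel_left, smul_neg, smul_smul, inv_mul_cancel₀ hpos.ne', one_smul] at h2
  exact h2
end
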